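/- arXiv:2408.11177 — 2 statements merged into one kernel-verified Lean document; each statement's English description precedes it below -/
import Mathlib

section
/- In the two-dimensional non-radial setting, assume p ≥ 1 + 4α₁′α₂′/(α₁′+α₂′). Then ν₀ > 0; equivalently, there exists a constant C > 0 such that Σ |u|^{p+1} ≤ C · M[u]^{(p−1)/2} ⟨Lu,u⟩ for every u ∈ ℓ²(Z²). -/
open scoped BigOperators ENNReal
open Filter Topology

noncomputable section

/-- `J^{(i)}` is of order `α ∈ (0,∞]` (one-dimensional coupling): for finite `α`,
`k^{1+α} J_k` tends to a finite positive limit; for `α = ∞`, `k^{1+β} J_k → 0` for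
every `β > 0`. -/
def JOrder1 (J : ℕ → ℝ) (α : ℝ≥0∞) : Prop :=
  if α = ⊤ then
    ∀ β : ℝ, 0 < β → Tendsto (fun k : ℕ => (k : ℝ) ^ ((1 : ℝ) + β) * J k) atTop (𝓝 0)
  else
    ∃ A : ℝ, 0 < A ∧ Tendsto (fun k : ℕ => (k : ℝ) ^ ((1 : ℝ) + α.toReal) * J k) atTop (𝓝 A)

/-- `α′ = α/2` for `α ∈ (0,2)` and `α′ = 1` for `α ∈ [2,∞]`. -/
def alphaPrime (α : ℝ≥0∞) : ℝ := if α < 2 then α.toReal / 2 else 1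

/-- The quadratic form of the two-dimensional non-radial operator:
`⟨Lu,u⟩ = (1/2) Σ_m Σ_{n ≠ n'} J⁽¹⁾_{|n-n'|} |u_{n,m} - u_{n',m}|²
        + (1/2) Σ_n Σ_{m ≠ m'} J⁽²⁾_{|m-m'|} |u_{n,m} - u_{n,m'}|²`. -/
def pairing2 (J1 J2 : ℕ → ℝ) (u : ℤ × ℤ → ℂ) : ℝ :=
  (1/2) * (∑' m : ℤ, ∑' n : ℤ, ∑' n' : ℤ,
      if n' = n then 0 else J1 (n - n').natAbs * ‖u (n, m) - u (n', m)‖ ^ 2) +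
  (1/2) * (∑' n : ℤ, ∑' m : ℤ, ∑' m' : ℤ,
      if m' = m then 0 else J2 (m - m').natAbs * ‖u (n, m) - u (n, m')‖ ^ 2)

/-- The mass `M[u] = Σ |u|²` on `ℤ²`. -/
def mass2 (u : ℤ × ℤ → ℂ) : ℝ := ∑' z : ℤ × ℤ, ‖u z‖ ^ 2

/-- Membership in `ℓ²(ℤ²)`. -/
def MemL2two (u : ℤ × ℤ → ℂ) : Prop := Summable fun z : ℤ × ℤ => ‖u z‖ ^ 2

/-- The potential term `Σ |u|^{p+1}` on `ℤ²`. -/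
def ppot2 (p : ℝ) (u : ℤ × ℤ → ℂ) : ℝ := ∑' z : ℤ × ℤ, ‖u z‖ ^ (p + 1)

/-- The energy `H[u] = (1/2)⟨Lu,u⟩ - (1/(p+1)) Σ |u|^{p+1}` on `ℤ²`. -/
def energy2 (J1 J2 : ℕ → ℝ) (p : ℝ) (u : ℤ × ℤ → ℂ) : ℝ :=
  (1/2) * pairing2 J1 J2 u - (1/(p+1)) * ppot2 p u

/-- `I_ν = inf {H[q] : q ∈ ℓ²(ℤ²), M[q] = ν}`. -/
def Ifun2 (J1 J2 : ℕ → ℝ) (p ν : ℝ) : ℝ :=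
  sInf {x : ℝ | ∃ q, MemL2two q ∧ mass2 q = ν ∧ energy2 J1 J2 p q = x}

/-- The Gagliardo–Nirenberg-type inequality at mass level `ν` on `ℤ²`. -/
def GNineq2 (J1 J2 : ℕ → ℝ) (p ν : ℝ) : Prop :=
  ∀ q : ℤ × ℤ → ℂ, MemL2two q →
    ppot2 p q ≤ ((p + 1) / 2) * ν ^ (-(p - 1) / 2) * (mass2 q) ^ ((p - 1) / 2) *
      pairing2 J1 J2 q

/-- The excitation threshold `ν₀` on `ℤ²`, with `ν₀ = 0` if the GN inequality fails
for every positive mass level. -/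
def nuZero2 (J1 J2 : ℕ → ℝ) (p : ℝ) : ℝ :=
  sSup (insert 0 {ν : ℝ | 0 < ν ∧ GNineq2 J1 J2 p ν})

/-! A set of at most `N` lattice points meets at most half of the translates `z + (i, j)`,
`1 ≤ i ≤ R₁`, `1 ≤ j ≤ R₂`, of a point `z` as soon as `R₁ R₂ ≥ 2 N`. Averaging the translation
energies of a function supported on the set over such a rectangle therefore controls its mass, and
the couplings in turn control the averages over each side by `R₁ ^ (2a)` and `R₂ ^ (2b)` times the
directional energies. Balancing `R₁ ^ a = R₂ ^ b` yields a Faber–Krahn inequality of exponent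
`2ab / (a + b)`. Applied to the slices of `|u|` between consecutive dyadic heights, whose supports
Chebyshev's inequality bounds by the mass, it gives the Gagliardo–Nirenberg inequality upon
summation, because slicing does not increase the energy. -/

section TranslationEnergy

variable {G E : Type*} [AddCommGroup G] [SeminormedAddCommGroup E]

/-- The translation energy `∑_z ‖u z - u (z + v)‖²`. It is valued in `[0, ∞]`, so that sums can be
exchanged freely and no summability has to be assumed. -/
def translationEnergy (u : G → E) (v : G) : ℝ≥0∞ := ∑' z, ‖u z - u (z + v)‖ₑ ^ 2

lemma enorm_add_sq_le (x y : E) : ‖x + y‖ₑ ^ 2 ≤ 2 * (‖x‖ₑ ^ 2 + ‖y‖ₑ ^ 2) := by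
  have h : ‖x + y‖₊ ^ 2 ≤ 2 * (‖x‖₊ ^ 2 + ‖y‖₊ ^ 2) :=
    (pow_le_pow_left' (nnnorm_add_le x y) 2).trans add_sq_le
  simp only [enorm_eq_nnnorm]
  exact_mod_cast h

lemma enorm_sum_sq_le {ι : Type*} (s : Finset ι) (f : ι → E) :
    ‖∑ i ∈ s, f i‖ₑ ^ 2 ≤ s.card * ∑ i ∈ s, ‖f i‖ₑ ^ 2 := by
  have h : ‖∑ i ∈ s, f i‖₊ ^ 2 ≤ s.card * ∑ i ∈ s, ‖f i‖₊ ^ 2 :=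
    (pow_le_pow_left' (nnnorm_sum_le s f) 2).trans sq_sum_le_card_mul_sum_sq
  simp only [enorm_eq_nnnorm]
  exact_mod_cast h

lemma tsum_translate_enorm_sub_sq (u : G → E) (v w : G) :
    ∑' z, ‖u (z + w) - u (z + w + v)‖ₑ ^ 2 = translationEnergy u v :=
  (Equiv.addRight w).tsum_eq fun z => ‖u z - u (z + v)‖ₑ ^ 2

lemma translationEnergy_add_le (u : G → E) (v w : G) :
    translationEnergy u (v + w) ≤ 2 * (translationEnergy u v + translationEnergy u w) := by
  rw [← tsum_translate_enorm_sub_sq u w v, translationEnergy, translationEnergy,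
    ← ENNReal.tsum_add, ← ENNReal.tsum_mul_left]
  refine ENNReal.tsum_le_tsum fun z => ?_
  rw [← add_assoc, ← sub_add_sub_cancel (u z) (u (z + v))]
  exact enorm_add_sq_le _ _

lemma translationEnergy_nsmul_le (u : G → E) (v : G) (n : ℕ) :
    translationEnergy u (n • v) ≤ (n : ℝ≥0∞) ^ 2 * translationEnergy u v := by
  have telescope (z : G) :
      u z - u (z + n • v) = ∑ i ∈ Finset.range n, (u (z + i • v) - u (z + i • v + v)) := by
    simpa [succ_nsmul, ← add_assoc] using
      (Finset.sum_range_sub' (fun i => u (z + i • v)) n).symm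
  calc translationEnergy u (n • v)
      = ∑' z, ‖∑ i ∈ Finset.range n, (u (z + i • v) - u (z + i • v + v))‖ₑ ^ 2 :=
        tsum_congr fun z => by rw [telescope]
    _ ≤ ∑' z, n * ∑ i ∈ Finset.range n, ‖u (z + i • v) - u (z + i • v + v)‖ₑ ^ 2 :=
        ENNReal.tsum_le_tsum fun z => by
          simpa only [Finset.card_range] using enorm_sum_sq_le (Finset.range n) _
    _ = n * ∑ _i ∈ Finset.range n, translationEnergy u v := by
        rw [ENNReal.tsum_mul_left, Summable.tsum_finsetSum fun _ _ => ENNReal.summable]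
        simp only [tsum_translate_enorm_sub_sq]
    _ = (n : ℝ≥0∞) ^ 2 * translationEnergy u v := by
        rw [Finset.sum_const, Finset.card_range, nsmul_eq_mul, sq, mul_assoc]

lemma translationEnergy_neg (u : G → E) (v : G) :
    translationEnergy u (-v) = translationEnergy u v := by
  rw [← tsum_translate_enorm_sub_sq u v (-v), translationEnergy]
  refine tsum_congr fun z => ?_
  rw [neg_add_cancel_right, ← enorm_neg, neg_sub]

lemma translationEnergy_le_tsum_enorm_sq (u : G → E) (v : G) :
    translationEnergy u v ≤ 4 * ∑' z, ‖u z‖ₑ ^ 2 := by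
  have h_translate : ∑' z, ‖u (z + v)‖ₑ ^ 2 = ∑' z, ‖u z‖ₑ ^ 2 :=
    (Equiv.addRight v).tsum_eq fun z => ‖u z‖ₑ ^ 2
  calc translationEnergy u v ≤ ∑' z, 2 * (‖u z‖ₑ ^ 2 + ‖u (z + v)‖ₑ ^ 2) :=
        ENNReal.tsum_le_tsum fun z => by
          simpa only [sub_eq_add_neg, enorm_neg] using enorm_add_sq_le (u z) (-u (z + v))
    _ = 4 * ∑' z, ‖u z‖ₑ ^ 2 := by
        rw [ENNReal.tsum_mul_left, ENNReal.tsum_add, h_translate]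
        ring

section Product

variable {H : Type*} [AddCommGroup H]

lemma translationEnergy_prod_left (u : G × H → E) (v : G) :
    translationEnergy u (v, 0) = ∑' m, translationEnergy (fun n => u (n, m)) v := by
  rw [translationEnergy, ENNReal.tsum_prod', ENNReal.tsum_comm]
  simp only [Prod.mk_add_mk, add_zero, translationEnergy]

lemma translationEnergy_prod_right (u : G × H → E) (w : H) :
    translationEnergy u (0, w) = ∑' n, translationEnergy (fun m => u (n, m)) w := by
  rw [translationEnergy, ENNReal.tsum_prod']
  simp only [Prod.mk_add_mk, add_zero, translationEnergy]

end Product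

/-- Most translates of a point of the support `A` by the larger set `B` leave `A`, where `g`
vanishes and the difference `g z - g (z + v)` is all of `g z`. -/
lemma card_mul_tsum_enorm_sq_le_sum_translationEnergy {g : G → E} {A B : Finset G}
    (hg : ∀ z ∉ A, g z = 0) (hcard : 2 * A.card ≤ B.card) :
    B.card * ∑' z, ‖g z‖ₑ ^ 2 ≤ 2 * ∑ v ∈ B, translationEnergy g v := by
  classical
  simp only [translationEnergy]
  rw [← Summable.tsum_finsetSum fun _ _ => ENNReal.summable, ← ENNReal.tsum_mul_left,
    ← ENNReal.tsum_mul_left]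
  refine ENNReal.tsum_le_tsum fun z => ?_
  have h_stay : (B.filter fun v => z + v ∈ A).card ≤ A.card :=
    Finset.card_le_card_of_injOn (z + ·) (fun v hv => (Finset.mem_filter.1 hv).2)
      (add_right_injective z).injOn
  have h_leave : B.card ≤ 2 * (B.filter fun v => z + v ∉ A).card := by
    have := Finset.card_filter_add_card_filter_not (s := B) fun v => z + v ∈ A
    omega
  calc (B.card : ℝ≥0∞) * ‖g z‖ₑ ^ 2
      ≤ (2 * (B.filter fun v => z + v ∉ A).card : ℕ) * ‖g z‖ₑ ^ 2 := by gcongr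
    _ = 2 * ∑ v ∈ B with z + v ∉ A, ‖g z - g (z + v)‖ₑ ^ 2 := by
        rw [Finset.sum_congr rfl fun v hv => by rw [hg _ (Finset.mem_filter.1 hv).2, sub_zero],
          Finset.sum_const, nsmul_eq_mul, Nat.cast_mul, Nat.cast_two, mul_assoc]
    _ ≤ 2 * ∑ v ∈ B, ‖g z - g (z + v)‖ₑ ^ 2 := by
        gcongr
        exact Finset.filter_subset _ _

lemma sum_sum_translationEnergy_add_le (g : G → E) (v w : ℕ → G) (R₁ R₂ : ℕ) :
    ∑ i ∈ Finset.range R₁, ∑ j ∈ Finset.range R₂, translationEnergy g (v i + w j) ≤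
      2 * (R₂ * ∑ i ∈ Finset.range R₁, translationEnergy g (v i) +
        R₁ * ∑ j ∈ Finset.range R₂, translationEnergy g (w j)) := by
  calc ∑ i ∈ Finset.range R₁, ∑ j ∈ Finset.range R₂, translationEnergy g (v i + w j)
      ≤ ∑ i ∈ Finset.range R₁, ∑ j ∈ Finset.range R₂,
          2 * (translationEnergy g (v i) + translationEnergy g (w j)) := by
        gcongr
        exact translationEnergy_add_le g _ _
    _ = _ := by
        simp only [← Finset.mul_sum, Finset.sum_add_distrib, Finset.sum_const, Finset.card_range,
          nsmul_eq_mul]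

lemma tsum_enorm_sq_le_of_sum_translationEnergy_le {e f : G}
    (hef : Function.Injective fun x : ℕ × ℕ => x.1 • e + x.2 • f) {g : G → E} {A : Finset G}
    (hg : ∀ z ∉ A, g z = 0) {R₁ R₂ : ℕ} (hR₁ : 0 < R₁) (hR₂ : 0 < R₂)
    (hcard : 2 * A.card ≤ R₁ * R₂) {x y : ℝ≥0∞}
    (hx : ∑ i ∈ Finset.range R₁, translationEnergy g ((i + 1) • e) ≤ R₁ * x)
    (hy : ∑ j ∈ Finset.range R₂, translationEnergy g ((j + 1) • f) ≤ R₂ * y) :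
    ∑' z, ‖g z‖ₑ ^ 2 ≤ 4 * (x + y) := by
  have shift_injective :
      Function.Injective fun x : ℕ × ℕ => (x.1 + 1) • e + (x.2 + 1) • f := fun x y hxy => by
    simpa [Prod.ext_iff] using hef (a₁ := (x.1 + 1, x.2 + 1)) (a₂ := (y.1 + 1, y.2 + 1)) hxy
  set B := (Finset.range R₁ ×ˢ Finset.range R₂).map ⟨_, shift_injective⟩ with hB
  have hB_card : B.card = R₁ * R₂ := by simp [hB]
  have h_scaled : ((R₁ * R₂ : ℕ) : ℝ≥0∞) * ∑' z, ‖g z‖ₑ ^ 2 ≤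
      ((R₁ * R₂ : ℕ) : ℝ≥0∞) * (4 * (x + y)) :=
    calc ((R₁ * R₂ : ℕ) : ℝ≥0∞) * ∑' z, ‖g z‖ₑ ^ 2
        ≤ 2 * ∑ v ∈ B, translationEnergy g v := by
          rw [← hB_card] at hcard ⊢
          exact card_mul_tsum_enorm_sq_le_sum_translationEnergy hg hcard
      _ = 2 * ∑ i ∈ Finset.range R₁, ∑ j ∈ Finset.range R₂,
            translationEnergy g ((i + 1) • e + (j + 1) • f) := by
          rw [hB, Finset.sum_map, Finset.sum_product]
          rfl
      _ ≤ 2 * (2 * (R₂ * (R₁ * x) + R₁ * (R₂ * y))) := by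
          grw [sum_sum_translationEnergy_add_le, hx, hy]
      _ = ((R₁ * R₂ : ℕ) : ℝ≥0∞) * (4 * (x + y)) := by
          push_cast
          ring
  exact (ENNReal.mul_le_mul_iff_right (by positivity) (ENNReal.natCast_ne_top _)).1 h_scaled

end TranslationEnergy

section CouplingEnergy

variable {G E : Type*} [AddCommGroup G] [SeminormedAddCommGroup E]

/-- The energy `∑_{k ≥ 1} J_k ∑_z ‖u z - u (z + k • e)‖²` of the coupling `J` acting along the
direction `e`. Only the shifts by positive multiples of `e` are summed, so that there is no
factor `1 / 2`. -/
def couplingEnergy (J : ℕ → ℝ) (u : G → E) (e : G) : ℝ≥0∞ :=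
  ∑' k : ℕ, ENNReal.ofReal (J (k + 1)) * translationEnergy u ((k + 1) • e)

/-- The coupling `J` is at least as strong as that of the fractional Laplacian of power `a`:
nearest neighbours interact and, for `a < 1`, `J_k` is bounded below by a multiple of
`k ^ (-(1 + 2a))` for large `k`. For `a ≥ 1` the nearest neighbours suffice. -/
structure AtLeastFractional (J : ℕ → ℝ) (a : ℝ) : Prop where
  one_pos : 0 < J 1
  tail : 1 ≤ a ∨ ∃ c : ℝ, 0 < c ∧ ∀ᶠ k : ℕ in atTop, c ≤ (k : ℝ) ^ (1 + 2 * a) * J k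

lemma couplingEnergy_prod_left {H : Type*} [AddCommGroup H] (J : ℕ → ℝ) (u : G × H → E) (e : G) :
    couplingEnergy J u (e, 0) = ∑' m, couplingEnergy J (fun n => u (n, m)) e := by
  simp only [couplingEnergy, Prod.smul_mk, smul_zero, translationEnergy_prod_left,
    ← ENNReal.tsum_mul_left]
  exact ENNReal.tsum_comm

lemma couplingEnergy_prod_right {H : Type*} [AddCommGroup H] (J : ℕ → ℝ) (u : G × H → E) (f : H) :
    couplingEnergy J u (0, f) = ∑' n, couplingEnergy J (fun m => u (n, m)) f := by
  simp only [couplingEnergy, Prod.smul_mk, smul_zero, translationEnergy_prod_right,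
    ← ENNReal.tsum_mul_left]
  exact ENNReal.tsum_comm

lemma couplingEnergy_ne_top {J : ℕ → ℝ} (hJ : Summable fun k => J (k + 1)) {u : G → E}
    (hu : ∑' z, ‖u z‖ₑ ^ 2 ≠ ∞) (e : G) : couplingEnergy J u e ≠ ∞ := by
  refine ne_top_of_le_ne_top ?_ (ENNReal.tsum_le_tsum fun k =>
    mul_le_mul_right (translationEnergy_le_tsum_enorm_sq u _) _)
  rw [ENNReal.tsum_mul_right]
  exact ENNReal.mul_ne_top hJ.tsum_ofReal_ne_top (ENNReal.mul_ne_top (by norm_num) hu)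

lemma translationEnergy_le_couplingEnergy {J : ℕ → ℝ} (hJ : 0 < J 1) (u : G → E) (e : G) :
    translationEnergy u e ≤ ENNReal.ofReal (1 / J 1) * couplingEnergy J u e := by
  calc translationEnergy u e
      = ENNReal.ofReal (1 / J 1) *
          (ENNReal.ofReal (J (0 + 1)) * translationEnergy u ((0 + 1) • e)) := by
        rw [← mul_assoc, ← ENNReal.ofReal_mul (by positivity), zero_add, one_smul,
          one_div_mul_cancel hJ.ne', ENNReal.ofReal_one, one_mul]
    _ ≤ ENNReal.ofReal (1 / J 1) * couplingEnergy J u e := by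
        gcongr
        exact ENNReal.le_tsum 0

lemma translationEnergy_nsmul_le_couplingEnergy {J : ℕ → ℝ} (hJ : 0 < J 1) (u : G → E) (e : G)
    {k R : ℕ} (hk : k ≤ R) :
    translationEnergy u (k • e) ≤ ENNReal.ofReal ((R : ℝ) ^ 2 / J 1) * couplingEnergy J u e := by
  calc translationEnergy u (k • e)
      ≤ (R : ℝ≥0∞) ^ 2 * (ENNReal.ofReal (1 / J 1) * couplingEnergy J u e) := by
        grw [translationEnergy_nsmul_le, hk, translationEnergy_le_couplingEnergy hJ]
    _ = ENNReal.ofReal ((R : ℝ) ^ 2 / J 1) * couplingEnergy J u e := by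
        rw [← mul_assoc, ← ENNReal.ofReal_natCast R, ← ENNReal.ofReal_pow (by positivity),
          ← ENNReal.ofReal_mul (by positivity), mul_one_div]

lemma sum_translationEnergy_le_pow_three_mul {J : ℕ → ℝ} (hJ : 0 < J 1) (u : G → E) (e : G)
    (R : ℕ) :
    ∑ k ∈ Finset.range R, translationEnergy u ((k + 1) • e) ≤
      ENNReal.ofReal ((R : ℝ) ^ 3 / J 1) * couplingEnergy J u e := by
  calc ∑ k ∈ Finset.range R, translationEnergy u ((k + 1) • e)
      ≤ ∑ _k ∈ Finset.range R, ENNReal.ofReal ((R : ℝ) ^ 2 / J 1) * couplingEnergy J u e :=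
        Finset.sum_le_sum fun k hk =>
          translationEnergy_nsmul_le_couplingEnergy hJ u e (Finset.mem_range.1 hk)
    _ = ENNReal.ofReal ((R : ℝ) ^ 3 / J 1) * couplingEnergy J u e := by
        rw [Finset.sum_const, Finset.card_range, nsmul_eq_mul, ← mul_assoc,
          ← ENNReal.ofReal_natCast R, ← ENNReal.ofReal_mul (by positivity)]
        ring_nf

lemma sum_translationEnergy_le_of_one_le {J : ℕ → ℝ} (hJ : 0 < J 1) {a : ℝ} (ha : 1 ≤ a)
    (u : G → E) (e : G) {R : ℕ} (hR : 0 < R) :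
    ∑ k ∈ Finset.range R, translationEnergy u ((k + 1) • e) ≤
      R * (ENNReal.ofReal (1 / J 1 * (R : ℝ) ^ (2 * a)) * couplingEnergy J u e) := by
  have h_exponent : (R : ℝ) ^ 3 / J 1 ≤ R * (1 / J 1 * (R : ℝ) ^ (2 * a)) :=
    calc (R : ℝ) ^ 3 / J 1 = R * (1 / J 1 * (R : ℝ) ^ (2 : ℝ)) := by
          rw [Real.rpow_two]
          ring
      _ ≤ R * (1 / J 1 * (R : ℝ) ^ (2 * a)) := by
          gcongr
          · exact_mod_cast hR
          · linarith
  grw [sum_translationEnergy_le_pow_three_mul hJ, h_exponent]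
  rw [ENNReal.ofReal_mul (by positivity), ENNReal.ofReal_natCast, mul_assoc]

lemma translationEnergy_nsmul_le_of_le_rpow_mul {J : ℕ → ℝ} {s c : ℝ} (hs : 0 ≤ s) (hc : 0 < c)
    (u : G → E) (e : G) {k R : ℕ} (hkR : k ≤ R) (hk : c ≤ (k : ℝ) ^ s * J k) :
    translationEnergy u (k • e) ≤ ENNReal.ofReal ((R : ℝ) ^ s / c) *
      (ENNReal.ofReal (J k) * translationEnergy u (k • e)) := by
  have hJk : 0 ≤ J k := (pos_of_mul_pos_right (hc.trans_le hk) (by positivity)).le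
  have h_one : 1 ≤ (R : ℝ) ^ s / c * J k := by
    rw [div_mul_eq_mul_div, one_le_div hc]
    exact hk.trans (by gcongr)
  calc translationEnergy u (k • e) = 1 * translationEnergy u (k • e) := (one_mul _).symm
    _ ≤ ENNReal.ofReal ((R : ℝ) ^ s / c * J k) * translationEnergy u (k • e) := by
        gcongr
        exact ENNReal.one_le_ofReal.2 h_one
    _ = _ := by rw [ENNReal.ofReal_mul (by positivity), mul_assoc]

lemma sum_translationEnergy_far_le {J : ℕ → ℝ} {s c : ℝ} (hs : 0 ≤ s) (hc : 0 < c) {K : ℕ}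
    (hK : ∀ k ≥ K, c ≤ (k : ℝ) ^ s * J k) (u : G → E) (e : G) (R : ℕ) :
    ∑ k ∈ Finset.range R with ¬ k < K, translationEnergy u ((k + 1) • e) ≤
      ENNReal.ofReal ((R : ℝ) ^ s / c) * couplingEnergy J u e := by
  calc ∑ k ∈ Finset.range R with ¬ k < K, translationEnergy u ((k + 1) • e)
      ≤ ∑ k ∈ Finset.range R with ¬ k < K, ENNReal.ofReal ((R : ℝ) ^ s / c) *
          (ENNReal.ofReal (J (k + 1)) * translationEnergy u ((k + 1) • e)) := by
        refine Finset.sum_le_sum fun k hk => ?_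
        simp only [Finset.mem_filter, Finset.mem_range, not_lt] at hk
        exact translationEnergy_nsmul_le_of_le_rpow_mul hs hc u e hk.1 (hK (k + 1) (by omega))
    _ ≤ ENNReal.ofReal ((R : ℝ) ^ s / c) * couplingEnergy J u e := by
        rw [← Finset.mul_sum]
        gcongr
        exact ENNReal.sum_le_tsum _

lemma sum_translationEnergy_le_of_le_rpow_mul {J : ℕ → ℝ} (hJ : 0 < J 1) {a c : ℝ} (ha : 0 ≤ a)
    (hc : 0 < c) {K : ℕ} (hK : ∀ k ≥ K, c ≤ (k : ℝ) ^ (1 + 2 * a) * J k) (u : G → E) (e : G)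
    {R : ℕ} (hR : 0 < R) :
    ∑ k ∈ Finset.range R, translationEnergy u ((k + 1) • e) ≤
      R * (ENNReal.ofReal ((1 / c + (K : ℝ) ^ 3 / J 1) * (R : ℝ) ^ (2 * a)) *
        couplingEnergy J u e) := by
  have h_near : ∑ k ∈ Finset.range R with k < K, translationEnergy u ((k + 1) • e) ≤
      ∑ k ∈ Finset.range K, translationEnergy u ((k + 1) • e) :=
    Finset.sum_le_sum_of_subset fun k hk => Finset.mem_range.2 (Finset.mem_filter.1 hk).2
  have h_constant : (K : ℝ) ^ 3 / J 1 + (R : ℝ) ^ (1 + 2 * a) / c ≤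
      R * ((1 / c + (K : ℝ) ^ 3 / J 1) * (R : ℝ) ^ (2 * a)) := by
    have hR_one : (1 : ℝ) ≤ R := by exact_mod_cast hR
    have : (1 : ℝ) ≤ R * (R : ℝ) ^ (2 * a) :=
      one_le_mul_of_one_le_of_one_le hR_one (Real.one_le_rpow hR_one (by positivity))
    calc (K : ℝ) ^ 3 / J 1 + (R : ℝ) ^ (1 + 2 * a) / c
        ≤ (K : ℝ) ^ 3 / J 1 * (R * (R : ℝ) ^ (2 * a)) + (R : ℝ) ^ (1 + 2 * a) / c := by
          gcongr
          exact le_mul_of_one_le_right (by positivity) this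
      _ = _ := by
          rw [Real.rpow_add (by positivity), Real.rpow_one]
          ring
  rw [← Finset.sum_filter_add_sum_filter_not (Finset.range R) (· < K)]
  grw [h_near, sum_translationEnergy_le_pow_three_mul hJ,
    sum_translationEnergy_far_le (by positivity) hc hK]
  rw [← add_mul, ← ENNReal.ofReal_add (by positivity) (by positivity), ← mul_assoc,
    ← ENNReal.ofReal_natCast R, ← ENNReal.ofReal_mul (by positivity)]
  gcongr

lemma AtLeastFractional.exists_sum_translationEnergy_le {J : ℕ → ℝ} {a : ℝ}
    (hJ : AtLeastFractional J a) (ha : 0 ≤ a) :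
    ∃ C : ℝ, 0 < C ∧ ∀ (u : G → E) (e : G) (R : ℕ), 0 < R →
      ∑ k ∈ Finset.range R, translationEnergy u ((k + 1) • e) ≤
        R * (ENNReal.ofReal (C * (R : ℝ) ^ (2 * a)) * couplingEnergy J u e) := by
  have h_one := hJ.one_pos
  rcases hJ.tail with ha_one | ⟨c, hc, h_tail⟩
  · exact ⟨1 / J 1, by positivity, fun u e R hR =>
      sum_translationEnergy_le_of_one_le h_one ha_one u e hR⟩
  · obtain ⟨K, hK⟩ := eventually_atTop.1 h_tail
    exact ⟨1 / c + (K : ℝ) ^ 3 / J 1, by positivity, fun u e R hR =>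
      sum_translationEnergy_le_of_le_rpow_mul h_one ha hc hK u e hR⟩

end CouplingEnergy

section FaberKrahn

/-- The Faber–Krahn inequality of exponent `σ` for an energy functional `𝓔`: on functions supported
in `A`, the lowest eigenvalue of `𝓔` is at least `K⁻¹ |A| ^ (-σ)`. -/
def FaberKrahn {ι : Type*} (𝓔 : (ι → ℝ) → ℝ≥0∞) (K σ : ℝ) : Prop :=
  ∀ (A : Finset ι) (g : ι → ℝ), (∀ z ∉ A, g z = 0) →
    ∑' z, ‖g z‖ₑ ^ 2 ≤ ENNReal.ofReal (K * (A.card : ℝ) ^ σ) * 𝓔 g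

lemma natCeil_rpow_rpow_le {X s a : ℝ} (hX : 1 ≤ X) (hs : 0 ≤ s) (ha : 0 ≤ a) :
    (⌈X ^ s⌉₊ : ℝ) ^ (2 * a) ≤ 2 ^ (2 * a) * X ^ (2 * (s * a)) := by
  have h_ceil : (⌈X ^ s⌉₊ : ℝ) ≤ 2 * X ^ s :=
    Nat.ceil_le_two_mul (le_trans (by norm_num) (Real.one_le_rpow hX hs))
  calc (⌈X ^ s⌉₊ : ℝ) ^ (2 * a) ≤ (2 * X ^ s) ^ (2 * a) := by gcongr
    _ = 2 ^ (2 * a) * X ^ (2 * (s * a)) := by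
        rw [Real.mul_rpow (by norm_num) (by positivity), ← Real.rpow_mul (by positivity)]
        ring_nf

lemma exists_balanced_sides {a b X : ℝ} (ha : 0 < a) (hb : 0 < b) (hX : 1 ≤ X) :
    ∃ R₁ R₂ : ℕ, 0 < R₁ ∧ 0 < R₂ ∧ X ≤ R₁ * R₂ ∧
      (R₁ : ℝ) ^ (2 * a) ≤ 2 ^ (2 * a) * X ^ (2 * (a * b / (a + b))) ∧
      (R₂ : ℝ) ^ (2 * b) ≤ 2 ^ (2 * b) * X ^ (2 * (a * b / (a + b))) := by
  refine ⟨⌈X ^ (b / (a + b))⌉₊, ⌈X ^ (a / (a + b))⌉₊, Nat.ceil_pos.2 (by positivity),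
    Nat.ceil_pos.2 (by positivity), ?_, ?_, ?_⟩
  · calc X = X ^ (b / (a + b)) * X ^ (a / (a + b)) := by
          rw [← Real.rpow_add (by positivity), ← add_div, add_comm b a, div_self (by positivity),
            Real.rpow_one]
      _ ≤ _ := by gcongr <;> exact Nat.le_ceil _
  · rw [show a * b / (a + b) = b / (a + b) * a by ring]
    exact natCeil_rpow_rpow_le hX (by positivity) ha.le
  · rw [show a * b / (a + b) = a / (a + b) * b by ring]
    exact natCeil_rpow_rpow_le hX (by positivity) hb.le

theorem exists_faberKrahn_couplingEnergy {G : Type*} [AddCommGroup G] {J₁ J₂ : ℕ → ℝ} {a b : ℝ}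
    (ha : 0 < a) (hb : 0 < b) (h₁ : AtLeastFractional J₁ a) (h₂ : AtLeastFractional J₂ b) {e f : G}
    (hef : Function.Injective fun x : ℕ × ℕ => x.1 • e + x.2 • f) :
    ∃ K : ℝ, 0 < K ∧ FaberKrahn (fun g : G → ℝ => couplingEnergy J₁ g e + couplingEnergy J₂ g f) K
      (2 * (a * b / (a + b))) := by
  obtain ⟨C₁, hC₁, hsum₁⟩ := h₁.exists_sum_translationEnergy_le (G := G) (E := ℝ) ha.le
  obtain ⟨C₂, hC₂, hsum₂⟩ := h₂.exists_sum_translationEnergy_le (G := G) (E := ℝ) hb.le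
  set σ := 2 * (a * b / (a + b)) with hσ
  set C := C₁ * 2 ^ (2 * a) + C₂ * 2 ^ (2 * b) with hC
  refine ⟨4 * (C * 2 ^ σ), by positivity, fun A g hg => ?_⟩
  rcases A.eq_empty_or_nonempty with rfl | hA
  · simp [hg _ (Finset.notMem_empty _)]
  have hX : (1 : ℝ) ≤ 2 * A.card := by
    have : (1 : ℝ) ≤ A.card := by exact_mod_cast hA.card_pos
    linarith
  obtain ⟨R₁, R₂, hR₁, hR₂, h_area, h_side₁, h_side₂⟩ := exists_balanced_sides ha hb hX
  rw [← hσ] at h_side₁ h_side₂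
  have h_mass := tsum_enorm_sq_le_of_sum_translationEnergy_le hef hg hR₁ hR₂
    (by exact_mod_cast h_area) (hsum₁ g e R₁ hR₁) (hsum₂ g f R₂ hR₂)
  have h_const₁ : C₁ * (R₁ : ℝ) ^ (2 * a) ≤ C * (2 * A.card) ^ σ := by
    grw [h_side₁, hC, add_mul, ← mul_assoc]
    exact le_add_of_nonneg_right (by positivity)
  have h_const₂ : C₂ * (R₂ : ℝ) ^ (2 * b) ≤ C * (2 * A.card) ^ σ := by
    grw [h_side₂, hC, add_mul, ← mul_assoc]
    exact le_add_of_nonneg_left (by positivity)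
  calc ∑' z, ‖g z‖ₑ ^ 2
      ≤ 4 * (ENNReal.ofReal (C * (2 * A.card) ^ σ) * couplingEnergy J₁ g e +
          ENNReal.ofReal (C * (2 * A.card) ^ σ) * couplingEnergy J₂ g f) := by
        grw [h_mass, h_const₁, h_const₂]
    _ = ENNReal.ofReal (4 * (C * 2 ^ σ) * (A.card : ℝ) ^ σ) *
          (couplingEnergy J₁ g e + couplingEnergy J₂ g f) := by
        rw [← mul_add, Real.mul_rpow zero_le_two (by positivity), mul_assoc 4, mul_assoc C,
          ENNReal.ofReal_mul (p := 4) (by norm_num), ENNReal.ofReal_ofNat, mul_assoc 4]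

end FaberKrahn

section Slicing

/-- The part of the height `x` lying between the levels `d ≤ c`. Truncating a function in this way
is how the Gagliardo–Nirenberg inequality is reduced to finitely supported functions. -/
def slice (c d x : ℝ) : ℝ := min x c - min x d

lemma slice_sub_slice_nonneg {c d x y : ℝ} (hdc : d ≤ c) (hyx : y ≤ x) :
    0 ≤ slice c d x - slice c d y := by
  unfold slice
  grind

lemma slice_sub_slice_le {c d x y : ℝ} (hdc : d ≤ c) (hyx : y ≤ x) :
    slice c d x - slice c d y ≤ x - y := by
  unfold slice
  grind

lemma slice_eq_zero_of_le {c d x : ℝ} (hdc : d ≤ c) (hx : x ≤ d) : slice c d x = 0 := by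
  rw [slice, min_eq_left hx, min_eq_left (hx.trans hdc), sub_self]

lemma slice_eq_sub_of_le {c d x : ℝ} (hdc : d ≤ c) (hx : c ≤ x) : slice c d x = c - d := by
  rw [slice, min_eq_right hx, min_eq_right (hdc.trans hx)]

lemma sum_range_slice (c : ℕ → ℝ) (x : ℝ) (N : ℕ) :
    ∑ n ∈ Finset.range N, slice (c n) (c (n + 1)) x = slice (c 0) (c N) x :=
  Finset.sum_range_sub' (fun n => min x (c n)) N

lemma sum_sq_slice_sub_slice_le {c : ℕ → ℝ} (hc : Antitone c) (x y : ℝ) (N : ℕ) :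
    ∑ n ∈ Finset.range N, (slice (c n) (c (n + 1)) x - slice (c n) (c (n + 1)) y) ^ 2 ≤
      (x - y) ^ 2 := by
  wlog hyx : y ≤ x generalizing x y
  · simpa only [sub_sq_comm] using this y x (le_of_not_ge hyx)
  calc ∑ n ∈ Finset.range N, (slice (c n) (c (n + 1)) x - slice (c n) (c (n + 1)) y) ^ 2
      ≤ (∑ n ∈ Finset.range N, (slice (c n) (c (n + 1)) x - slice (c n) (c (n + 1)) y)) ^ 2 :=
        Finset.sum_sq_le_sq_sum_of_nonneg fun n _ => slice_sub_slice_nonneg (hc n.le_succ) hyx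
    _ = (slice (c 0) (c N) x - slice (c 0) (c N) y) ^ 2 := by
        rw [Finset.sum_sub_distrib, sum_range_slice, sum_range_slice]
    _ ≤ (x - y) ^ 2 :=
        pow_le_pow_left₀ (slice_sub_slice_nonneg (hc N.zero_le) hyx)
          (slice_sub_slice_le (hc N.zero_le) hyx) 2

lemma enorm_sq_eq_ofReal_sq (x : ℝ) : ‖x‖ₑ ^ 2 = ENNReal.ofReal (x ^ 2) := by
  rw [← ofReal_norm, ← ENNReal.ofReal_pow (norm_nonneg x), Real.norm_eq_abs, sq_abs]

lemma tsum_enorm_slice_sub_slice_sq_le {c : ℕ → ℝ} (hc : Antitone c) (x y : ℝ) :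
    ∑' n, ‖slice (c n) (c (n + 1)) x - slice (c n) (c (n + 1)) y‖ₑ ^ 2 ≤ ‖x - y‖ₑ ^ 2 := by
  refine ENNReal.tsum_le_of_sum_range_le fun N => ?_
  simp only [enorm_sq_eq_ofReal_sq]
  rw [← ENNReal.ofReal_sum_of_nonneg fun _ _ => sq_nonneg _]
  exact ENNReal.ofReal_le_ofReal (sum_sq_slice_sub_slice_le hc x y N)

variable {G E : Type*} [AddCommGroup G] [SeminormedAddCommGroup E]

lemma tsum_translationEnergy_slice_le {c : ℕ → ℝ} (hc : Antitone c) (u : G → E) (v : G) :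
    ∑' n, translationEnergy (fun z => slice (c n) (c (n + 1)) ‖u z‖) v ≤
      translationEnergy u v := by
  simp only [translationEnergy]
  rw [ENNReal.tsum_comm]
  refine ENNReal.tsum_le_tsum fun z => (tsum_enorm_slice_sub_slice_sq_le hc _ _).trans ?_
  gcongr
  exact enorm_le_iff_norm_le.2 (abs_norm_sub_norm_le _ _)

lemma tsum_couplingEnergy_slice_le (J : ℕ → ℝ) {c : ℕ → ℝ} (hc : Antitone c) (u : G → E) (e : G) :
    ∑' n, couplingEnergy J (fun z => slice (c n) (c (n + 1)) ‖u z‖) e ≤ couplingEnergy J u e := by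
  simp only [couplingEnergy]
  rw [ENNReal.tsum_comm]
  simp only [ENNReal.tsum_mul_left]
  gcongr
  exact tsum_translationEnergy_slice_le hc u _

end Slicing

section GagliardoNirenberg

lemma antitone_div_two_pow {S : ℝ} (hS : 0 ≤ S) : Antitone fun n : ℕ => S / 2 ^ n :=
  fun _ _ hmn => div_le_div_of_nonneg_left hS (by positivity) (pow_le_pow_right₀ one_le_two hmn)

variable {ι E : Type*} [SeminormedAddCommGroup E]

lemma exists_finset_card_mul_sq_le {u : ι → E} {S : ℝ}
    (hu : ∑' z, ‖u z‖ₑ ^ 2 ≤ ENNReal.ofReal (S ^ 2)) {d : ℝ} (hd : 0 < d) :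
    ∃ A : Finset ι, (∀ z ∉ A, ‖u z‖ ≤ d) ∧ A.card ≤ S ^ 2 / d ^ 2 := by
  obtain ⟨h_finite, h_card⟩ := ENNReal.finset_card_const_le_le_of_tsum_le ENNReal.ofReal_ne_top hu
    (ε := ENNReal.ofReal (d ^ 2)) (by simpa using hd.ne')
  refine ⟨h_finite.toFinset, fun z hz => ?_, ?_⟩
  · by_contra! h
    refine hz (h_finite.mem_toFinset.2 ?_)
    simp only [Set.mem_ofPred_eq, ← ofReal_norm, ← ENNReal.ofReal_pow (norm_nonneg _)]
    gcongr
  · rw [← ENNReal.ofReal_div_of_pos (by positivity), ← ENNReal.ofReal_natCast] at h_card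
    exact (ENNReal.ofReal_le_ofReal_iff (by positivity)).1 h_card

lemma exists_rpow_le_rpow_mul_slice_sq {S p x : ℝ} (hp : 1 ≤ p) (hx : 0 < x) (hxS : x ≤ S) :
    ∃ n : ℕ, x ^ (p + 1) ≤
      16 * (2 * (S / 2 ^ n)) ^ (p - 1) * slice (S / 2 ^ n) (S / 2 ^ (n + 1)) x ^ 2 := by
  have hS : 0 < S := hx.trans_le hxS
  obtain ⟨n, h_lower, h_upper⟩ := exists_nat_pow_near_of_lt_one (x := x / S) (y := 1 / 2)
    (by positivity) ((div_le_one hS).2 hxS) (by norm_num) (by norm_num)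
  rw [lt_div_iff₀' hS, one_div_pow, mul_one_div] at h_lower
  rw [div_le_iff₀' hS, one_div_pow, mul_one_div] at h_upper
  have h_double (m : ℕ) : S / 2 ^ m = 2 * (S / 2 ^ (m + 1)) := by
    rw [pow_succ]
    field_simp
  have h_slice : slice (S / 2 ^ (n + 1)) (S / 2 ^ (n + 2)) x = S / 2 ^ (n + 2) := by
    have h_levels : S / 2 ^ (n + 2) ≤ S / 2 ^ (n + 1) := antitone_div_two_pow hS.le (by omega)
    rw [slice_eq_sub_of_le h_levels h_lower.le, h_double (n + 1)]
    ring
  refine ⟨n + 1, ?_⟩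
  calc x ^ (p + 1) = x ^ (p - 1) * x ^ 2 := by
        rw [← Real.rpow_natCast, ← Real.rpow_add hx, Nat.cast_ofNat]
        ring_nf
    _ ≤ (2 * (S / 2 ^ (n + 1))) ^ (p - 1) * (2 * (2 * (S / 2 ^ (n + 2)))) ^ 2 := by
        rw [h_double n] at h_upper
        rw [← h_double (n + 1)]
        gcongr
    _ = _ := by
        rw [h_slice]
        ring

lemma enorm_rpow_le_tsum_slice {S p : ℝ} (hp : 1 ≤ p) {x : E} (hx : ‖x‖ ≤ S) :
    ‖x‖ₑ ^ (p + 1) ≤ ∑' n : ℕ, ENNReal.ofReal (16 * (2 * (S / 2 ^ n)) ^ (p - 1)) *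
      ‖slice (S / 2 ^ n) (S / 2 ^ (n + 1)) ‖x‖‖ₑ ^ 2 := by
  have hS : 0 ≤ S := (norm_nonneg x).trans hx
  rw [← ofReal_norm, ENNReal.ofReal_rpow_of_nonneg (norm_nonneg x) (by linarith)]
  rcases (norm_nonneg x).eq_or_lt with h_zero | h_pos
  · simp [← h_zero, Real.zero_rpow (by linarith : p + 1 ≠ 0)]
  obtain ⟨n, hn⟩ := exists_rpow_le_rpow_mul_slice_sq hp h_pos hx
  refine le_trans ?_ (ENNReal.le_tsum n)
  rw [enorm_sq_eq_ofReal_sq, ← ENNReal.ofReal_mul (by positivity)]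
  exact ENNReal.ofReal_le_ofReal hn

lemma rpow_mul_rpow_le_of_one_le {S t p σ : ℝ} (hS : 0 ≤ S) (ht : 1 ≤ t) (hp : 1 + 2 * σ ≤ p) :
    (2 * (S / t)) ^ (p - 1) * (4 * t ^ 2) ^ σ ≤ 2 ^ (p - 1) * 4 ^ σ * S ^ (p - 1) := by
  calc (2 * (S / t)) ^ (p - 1) * (4 * t ^ 2) ^ σ
      = 2 ^ (p - 1) * 4 ^ σ * S ^ (p - 1) * t ^ (2 * σ - (p - 1)) := by
        rw [Real.mul_rpow zero_le_two (by positivity), Real.div_rpow hS (by positivity),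
          Real.mul_rpow (by norm_num) (by positivity), ← Real.rpow_natCast t 2,
          ← Real.rpow_mul (by positivity), Nat.cast_ofNat, Real.rpow_sub (by positivity) (2 * σ)]
        field_simp
    _ ≤ 2 ^ (p - 1) * 4 ^ σ * S ^ (p - 1) :=
        mul_le_of_le_one_right (by positivity)
          (Real.rpow_le_one_of_one_le_of_nonpos ht (by linarith))

namespace FaberKrahn

variable {𝓔 : (ι → ℝ) → ℝ≥0∞} {K σ p S : ℝ}

lemma tsum_slice_sq_le (h𝓔 : FaberKrahn 𝓔 K σ) (hK : 0 ≤ K) (hσ : 0 ≤ σ) (hp : 1 + 2 * σ ≤ p)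
    (hS : 0 < S) {u : ι → E} (hu : ∑' z, ‖u z‖ₑ ^ 2 ≤ ENNReal.ofReal (S ^ 2)) (n : ℕ) :
    ENNReal.ofReal (16 * (2 * (S / 2 ^ n)) ^ (p - 1)) *
        ∑' z, ‖slice (S / 2 ^ n) (S / 2 ^ (n + 1)) ‖u z‖‖ₑ ^ 2 ≤
      ENNReal.ofReal (16 * K * 2 ^ (p - 1) * 4 ^ σ * S ^ (p - 1)) *
        𝓔 fun z => slice (S / 2 ^ n) (S / 2 ^ (n + 1)) ‖u z‖ := by
  obtain ⟨A, hA, h_card⟩ :=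
    exists_finset_card_mul_sq_le hu (d := S / 2 ^ (n + 1)) (by positivity)
  have h_card' : (A.card : ℝ) ≤ 4 * (2 ^ n) ^ 2 := h_card.trans_eq (by field_simp; ring)
  have h_mass := h𝓔 A (fun z => slice (S / 2 ^ n) (S / 2 ^ (n + 1)) ‖u z‖) fun z hz =>
    slice_eq_zero_of_le (antitone_div_two_pow hS.le n.le_succ) (hA z hz)
  have h_constant : 16 * (2 * (S / 2 ^ n)) ^ (p - 1) * (K * (A.card : ℝ) ^ σ) ≤
      16 * K * 2 ^ (p - 1) * 4 ^ σ * S ^ (p - 1) :=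
    calc 16 * (2 * (S / 2 ^ n)) ^ (p - 1) * (K * (A.card : ℝ) ^ σ)
        ≤ 16 * (2 * (S / 2 ^ n)) ^ (p - 1) * (K * (4 * (2 ^ n) ^ 2) ^ σ) := by gcongr
      _ = 16 * K * ((2 * (S / 2 ^ n)) ^ (p - 1) * (4 * (2 ^ n) ^ 2) ^ σ) := by ring
      _ ≤ 16 * K * (2 ^ (p - 1) * 4 ^ σ * S ^ (p - 1)) := by
          refine mul_le_mul_of_nonneg_left ?_ (by positivity)
          exact rpow_mul_rpow_le_of_one_le hS.le (one_le_pow₀ one_le_two) hp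
      _ = _ := by ring
  grw [h_mass]
  rw [← mul_assoc, ← ENNReal.ofReal_mul (by positivity)]
  gcongr

theorem tsum_enorm_rpow_le (h𝓔 : FaberKrahn 𝓔 K σ) (hK : 0 ≤ K) (hσ : 0 ≤ σ)
    (hp : 1 + 2 * σ ≤ p) (hS : 0 ≤ S) {u : ι → E}
    (hu : ∑' z, ‖u z‖ₑ ^ 2 ≤ ENNReal.ofReal (S ^ 2)) :
    ∑' z, ‖u z‖ₑ ^ (p + 1) ≤ ENNReal.ofReal (16 * K * 2 ^ (p - 1) * 4 ^ σ * S ^ (p - 1)) *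
      ∑' n : ℕ, 𝓔 fun z => slice (S / 2 ^ n) (S / 2 ^ (n + 1)) ‖u z‖ := by
  have h_norm (z : ι) : ‖u z‖ ≤ S := by
    have h_sq := (ENNReal.le_tsum z).trans hu
    rw [← ofReal_norm, ← ENNReal.ofReal_pow (norm_nonneg _),
      ENNReal.ofReal_le_ofReal_iff (by positivity)] at h_sq
    exact le_of_sq_le_sq h_sq hS
  rcases hS.eq_or_lt with rfl | hS
  · have h_zero (z : ι) : ‖u z‖ₑ = 0 := by
      rw [← ofReal_norm, ENNReal.ofReal_of_nonpos (h_norm z)]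
    simp [h_zero, ENNReal.zero_rpow_of_pos (by linarith : 0 < p + 1)]
  calc ∑' z, ‖u z‖ₑ ^ (p + 1)
      ≤ ∑' z, ∑' n : ℕ, ENNReal.ofReal (16 * (2 * (S / 2 ^ n)) ^ (p - 1)) *
          ‖slice (S / 2 ^ n) (S / 2 ^ (n + 1)) ‖u z‖‖ₑ ^ 2 :=
        ENNReal.tsum_le_tsum fun z => enorm_rpow_le_tsum_slice (by linarith) (h_norm z)
    _ = ∑' n : ℕ, ENNReal.ofReal (16 * (2 * (S / 2 ^ n)) ^ (p - 1)) *
          ∑' z, ‖slice (S / 2 ^ n) (S / 2 ^ (n + 1)) ‖u z‖‖ₑ ^ 2 := by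
        rw [ENNReal.tsum_comm]
        simp only [ENNReal.tsum_mul_left]
    _ ≤ _ := by
        rw [← ENNReal.tsum_mul_left]
        exact ENNReal.tsum_le_tsum fun n => h𝓔.tsum_slice_sq_le hK hσ hp hS hu n

end FaberKrahn

theorem exists_tsum_enorm_rpow_le_couplingEnergy {G : Type*} [AddCommGroup G] {J₁ J₂ : ℕ → ℝ}
    {a b p : ℝ} (ha : 0 < a) (hb : 0 < b) (h₁ : AtLeastFractional J₁ a)
    (h₂ : AtLeastFractional J₂ b) (hp : 1 + 4 * a * b / (a + b) ≤ p) {e f : G}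
    (hef : Function.Injective fun x : ℕ × ℕ => x.1 • e + x.2 • f) :
    ∃ C : ℝ, 0 < C ∧ ∀ (u : G → E) (S : ℝ), 0 ≤ S → ∑' z, ‖u z‖ₑ ^ 2 ≤ ENNReal.ofReal (S ^ 2) →
      ∑' z, ‖u z‖ₑ ^ (p + 1) ≤
        ENNReal.ofReal (C * S ^ (p - 1)) * (couplingEnergy J₁ u e + couplingEnergy J₂ u f) := by
  obtain ⟨K, hK, h_faberKrahn⟩ := exists_faberKrahn_couplingEnergy ha hb h₁ h₂ hef
  set σ := 2 * (a * b / (a + b))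
  have hσp : 1 + 2 * σ ≤ p := hp.trans_eq' (by ring)
  refine ⟨16 * K * 2 ^ (p - 1) * 4 ^ σ, by positivity, fun u S hS hu => ?_⟩
  grw [h_faberKrahn.tsum_enorm_rpow_le hK.le (by positivity) hσp hS hu, ENNReal.tsum_add,
    tsum_couplingEnergy_slice_le J₁ (antitone_div_two_pow hS),
    tsum_couplingEnergy_slice_le J₂ (antitone_div_two_pow hS)]

end GagliardoNirenberg

section LatticeForms

variable {E : Type*} [SeminormedAddCommGroup E]

lemma tsum_tsum_enorm_sub_sq_eq (J : ℕ → ℝ) (f : ℤ → E) :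
    ∑' n, ∑' n', (if n' = n then 0 else ENNReal.ofReal (J (n - n').natAbs) * ‖f n - f n'‖ₑ ^ 2) =
      2 * couplingEnergy J f 1 := by
  have h_translate (n : ℤ) :
      ∑' n', (if n' = n then 0 else ENNReal.ofReal (J (n - n').natAbs) * ‖f n - f n'‖ₑ ^ 2) =
        ∑' d : ℤ, if d = 0 then 0 else ENNReal.ofReal (J d.natAbs) * ‖f n - f (n + d)‖ₑ ^ 2 := by
    rw [← (Equiv.addLeft n).tsum_eq]
    simp only [Equiv.coe_addLeft, add_eq_left, sub_add_cancel_left, Int.natAbs_neg]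
  have h_nat (k : ℕ) : ((k : ℤ) + 1).natAbs = k + 1 := by omega
  have h_ne (k : ℕ) : (k : ℤ) + 1 ≠ 0 := by omega
  calc ∑' n, ∑' n', (if n' = n then 0 else ENNReal.ofReal (J (n - n').natAbs) * ‖f n - f n'‖ₑ ^ 2)
      = ∑' d : ℤ, if d = 0 then 0 else ENNReal.ofReal (J d.natAbs) * translationEnergy f d := by
        simp only [h_translate]
        rw [ENNReal.tsum_comm]
        refine tsum_congr fun d => ?_
        split_ifs
        · exact tsum_zero
        · exact ENNReal.tsum_mul_left
    _ = 2 * couplingEnergy J f 1 := by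
        rw [tsum_of_add_one_of_neg_add_one ENNReal.summable ENNReal.summable]
        simp only [Int.natAbs_neg, h_nat, neg_eq_zero, h_ne, if_false, if_true,
          translationEnergy_neg, couplingEnergy, nsmul_eq_mul, mul_one, Nat.cast_add, Nat.cast_one]
        ring

/-- The quadratic form `∑_{n ≠ n'} J_{|n - n'|} ‖f n - f n'‖²` of a coupling on the line, from which
both halves of `pairing2` are built. -/
def lineForm (J : ℕ → ℝ) (f : ℤ → E) : ℝ :=
  ∑' n : ℤ, ∑' n' : ℤ, if n' = n then 0 else J (n - n').natAbs * ‖f n - f n'‖ ^ 2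

lemma lineForm_eq_toReal {J : ℕ → ℝ} (hJ : ∀ k, 0 ≤ J k) {f : ℤ → E}
    (hf : couplingEnergy J f 1 ≠ ∞) : lineForm J f = 2 * (couplingEnergy J f 1).toReal := by
  have h_finite := ENNReal.mul_ne_top ENNReal.ofNat_ne_top hf (a := 2)
  rw [← tsum_tsum_enorm_sub_sq_eq] at h_finite
  have h_row := ENNReal.ne_top_of_tsum_ne_top h_finite
  rw [← ENNReal.toReal_ofNat, ← ENNReal.toReal_mul, ← tsum_tsum_enorm_sub_sq_eq,
    ENNReal.tsum_toReal_eq h_row, lineForm]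
  refine tsum_congr fun n => ?_
  rw [ENNReal.tsum_toReal_eq (ENNReal.ne_top_of_tsum_ne_top (h_row n))]
  refine tsum_congr fun n' => ?_
  split_ifs
  · rfl
  · rw [ENNReal.toReal_mul, ENNReal.toReal_ofReal (hJ _), ENNReal.toReal_pow, toReal_enorm]

lemma tsum_lineForm_eq_toReal {ι : Type*} {J : ℕ → ℝ} (hJ : ∀ k, 0 ≤ J k) {f : ι → ℤ → E}
    (hf : ∑' i, couplingEnergy J (f i) 1 ≠ ∞) :
    ∑' i, lineForm J (f i) = 2 * (∑' i, couplingEnergy J (f i) 1).toReal := by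
  have h_line := ENNReal.ne_top_of_tsum_ne_top hf
  rw [ENNReal.tsum_toReal_eq h_line, ← tsum_mul_left]
  exact tsum_congr fun i => lineForm_eq_toReal hJ (h_line i)

variable {u : ℤ × ℤ → ℂ}

lemma MemL2two.tsum_enorm_sq (hu : MemL2two u) :
    ∑' z, ‖u z‖ₑ ^ 2 = ENNReal.ofReal (mass2 u) := by
  rw [mass2, ENNReal.ofReal_tsum_of_nonneg (fun _ => by positivity) hu]
  simp only [← ofReal_norm, ENNReal.ofReal_pow (norm_nonneg _)]

lemma ppot2_eq_toReal {p : ℝ} (hp : 0 ≤ p + 1) (u : ℤ × ℤ → ℂ) :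
    ppot2 p u = (∑' z, ‖u z‖ₑ ^ (p + 1)).toReal := by
  rw [ENNReal.tsum_toReal_eq fun z => ENNReal.rpow_ne_top_of_nonneg hp enorm_ne_top]
  simp only [← ENNReal.toReal_rpow, toReal_enorm, ppot2]

lemma MemL2two.pairing2_eq_toReal (hu : MemL2two u) {J₁ J₂ : ℕ → ℝ} (hJ₁ : ∀ k, 0 ≤ J₁ k)
    (hJ₂ : ∀ k, 0 ≤ J₂ k) (hJ₁_sum : Summable fun k => J₁ (k + 1))
    (hJ₂_sum : Summable fun k => J₂ (k + 1)) :
    pairing2 J₁ J₂ u = (couplingEnergy J₁ u (1, 0) + couplingEnergy J₂ u (0, 1)).toReal := by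
  have h_mass : ∑' z, ‖u z‖ₑ ^ 2 ≠ ∞ := hu.tsum_enorm_sq ▸ ENNReal.ofReal_ne_top
  have h_left := couplingEnergy_ne_top hJ₁_sum h_mass (1, 0)
  have h_right := couplingEnergy_ne_top hJ₂_sum h_mass (0, 1)
  rw [ENNReal.toReal_add h_left h_right]
  rw [couplingEnergy_prod_left] at h_left ⊢
  rw [couplingEnergy_prod_right] at h_right ⊢
  calc pairing2 J₁ J₂ u = 1 / 2 * ∑' m, lineForm J₁ (fun n => u (n, m)) +
        1 / 2 * ∑' n, lineForm J₂ (fun m => u (n, m)) := rfl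
    _ = _ := by
        rw [tsum_lineForm_eq_toReal hJ₁ h_left, tsum_lineForm_eq_toReal hJ₂ h_right]
        ring

lemma injective_nsmul_add_nsmul_int :
    Function.Injective fun x : ℕ × ℕ => x.1 • ((1, 0) : ℤ × ℤ) + x.2 • ((0, 1) : ℤ × ℤ) :=
  fun x y hxy => by simpa [Prod.ext_iff] using hxy

theorem exists_ppot2_le {J₁ J₂ : ℕ → ℝ} (hJ₁ : ∀ k, 0 ≤ J₁ k) (hJ₂ : ∀ k, 0 ≤ J₂ k)
    (hJ₁_sum : Summable fun k => J₁ (k + 1)) (hJ₂_sum : Summable fun k => J₂ (k + 1)) {a b p : ℝ}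
    (ha : 0 < a) (hb : 0 < b) (h₁ : AtLeastFractional J₁ a) (h₂ : AtLeastFractional J₂ b)
    (hp : 1 + 4 * a * b / (a + b) ≤ p) :
    ∃ C : ℝ, 0 < C ∧ ∀ u : ℤ × ℤ → ℂ, MemL2two u →
      ppot2 p u ≤ C * mass2 u ^ ((p - 1) / 2) * pairing2 J₁ J₂ u := by
  have hp_one : 1 ≤ p := (le_add_of_nonneg_right (by positivity)).trans hp
  obtain ⟨C, hC, h_GN⟩ := exists_tsum_enorm_rpow_le_couplingEnergy (E := ℂ) ha hb h₁ h₂ hp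
    injective_nsmul_add_nsmul_int
  refine ⟨C, hC, fun u hu => ?_⟩
  have h_mass : 0 ≤ mass2 u := tsum_nonneg fun _ => by positivity
  have h_sqrt : √(mass2 u) ^ (p - 1) = mass2 u ^ ((p - 1) / 2) := by
    rw [Real.sqrt_eq_rpow, ← Real.rpow_mul h_mass, one_div_mul_eq_div]
  have h_bound := h_GN u √(mass2 u) (Real.sqrt_nonneg _)
    (by rw [hu.tsum_enorm_sq, Real.sq_sqrt h_mass])
  have h_energy : couplingEnergy J₁ u (1, 0) + couplingEnergy J₂ u (0, 1) ≠ ∞ := by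
    have h_finite : ∑' z, ‖u z‖ₑ ^ 2 ≠ ∞ := hu.tsum_enorm_sq ▸ ENNReal.ofReal_ne_top
    exact ENNReal.add_ne_top.2
      ⟨couplingEnergy_ne_top hJ₁_sum h_finite _, couplingEnergy_ne_top hJ₂_sum h_finite _⟩
  rw [ppot2_eq_toReal (by linarith), hu.pairing2_eq_toReal hJ₁ hJ₂ hJ₁_sum hJ₂_sum, ← h_sqrt,
    ← ENNReal.toReal_ofReal_mul _ _ (by positivity)]
  exact ENNReal.toReal_mono (ENNReal.mul_ne_top ENNReal.ofReal_ne_top h_energy) h_bound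

end LatticeForms

section Threshold

lemma memL2two_single : MemL2two (Pi.single 0 1) :=
  summable_of_ne_finset_zero (s := {0}) fun z hz => by
    simp [Pi.single_eq_of_ne (Finset.notMem_singleton.1 hz)]

lemma mass2_single : mass2 (Pi.single 0 1) = 1 := by
  rw [mass2, tsum_eq_single 0 fun z hz => by simp [Pi.single_eq_of_ne hz]]
  simp

lemma ppot2_single {p : ℝ} (hp : p + 1 ≠ 0) : ppot2 p (Pi.single 0 1) = 1 := by
  rw [ppot2, tsum_eq_single 0 fun z hz => by simp [Pi.single_eq_of_ne hz, Real.zero_rpow hp]]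
  simp

variable {J₁ J₂ : ℕ → ℝ} {p : ℝ}

lemma GNineq2.le_rpow {ν : ℝ} (hν : 0 < ν) (hp : 1 < p) (h : GNineq2 J₁ J₂ p ν) :
    ν ≤ ((p + 1) / 2 * pairing2 J₁ J₂ (Pi.single 0 1)) ^ ((p - 1) / 2)⁻¹ := by
  have h_test := h _ memL2two_single
  rw [mass2_single, ppot2_single (by linarith), Real.one_rpow, mul_one, neg_div,
    Real.rpow_neg hν.le, mul_right_comm, ← div_eq_mul_inv, one_le_div (by positivity)] at h_test
  rwa [Real.le_rpow_inv_iff_of_pos hν.le ((by positivity : 0 ≤ ν ^ ((p - 1) / 2)).trans h_test)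
    (by linarith)]

lemma nuZero2_pos_of_le (hp : 1 < p) {C : ℝ} (hC : 0 < C)
    (h : ∀ u, MemL2two u → ppot2 p u ≤ C * mass2 u ^ ((p - 1) / 2) * pairing2 J₁ J₂ u) :
    0 < nuZero2 J₁ J₂ p := by
  have h_bdd : BddAbove (insert 0 {ν : ℝ | 0 < ν ∧ GNineq2 J₁ J₂ p ν}) :=
    bddAbove_insert.2 ⟨_, fun ν hν => hν.2.le_rpow hν.1 hp⟩
  have hp_sub : p - 1 ≠ 0 := by linarith
  set B := 2 * C / (p + 1) with hB
  have hB_pos : 0 < B := by positivity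
  have h_power : (B ^ (-(2 / (p - 1)))) ^ (-(p - 1) / 2) = B := by
    rw [← Real.rpow_mul hB_pos.le, show -(2 / (p - 1)) * (-(p - 1) / 2) = 1 by field_simp,
      Real.rpow_one]
  have h_GN : GNineq2 J₁ J₂ p (B ^ (-(2 / (p - 1)))) := fun u hu => by
    rw [h_power, hB, div_mul_div_cancel₀' (by positivity), mul_div_cancel_left₀ _ two_ne_zero]
    exact h u hu
  have h_pos : 0 < B ^ (-(2 / (p - 1))) := by positivity
  exact h_pos.trans_le (le_csSup h_bdd (Set.mem_insert_of_mem _ ⟨h_pos, h_GN⟩))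

end Threshold

section CouplingOrder

lemma JOrder1.atLeastFractional {J : ℕ → ℝ} {α : ℝ≥0∞} (hJ : JOrder1 J α) (h_one : 0 < J 1) :
    AtLeastFractional J (alphaPrime α) := by
  refine ⟨h_one, ?_⟩
  by_cases hα : α < 2
  · rw [JOrder1, if_neg hα.ne_top] at hJ
    obtain ⟨A, hA, h_tendsto⟩ := hJ
    refine .inr ⟨A / 2, half_pos hA, ?_⟩
    rw [alphaPrime, if_pos hα, mul_div_cancel₀ _ two_ne_zero]
    filter_upwards [h_tendsto.eventually_const_lt (half_lt_self hA)] with k hk using hk.le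
  · rw [alphaPrime, if_neg hα]
    exact .inl le_rfl

lemma alphaPrime_pos {α : ℝ≥0∞} (hα : 0 < α) : 0 < alphaPrime α := by
  unfold alphaPrime
  split_ifs with h
  · exact half_pos (ENNReal.toReal_pos hα.ne' h.ne_top)
  · exact one_pos

end CouplingOrder

theorem stmt14_general (p : ℝ) (J1 J2 : ℕ → ℝ)
    (hJ1pos : ∀ k, 0 ≤ J1 k) (hJ2pos : ∀ k, 0 ≤ J2 k)
    (hJ1sum : Summable fun k : ℕ => J1 (k + 1)) (hJ2sum : Summable fun k : ℕ => J2 (k + 1))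
    (a b : ℝ) (ha : 0 < a) (hb : 0 < b)
    (hJ1 : AtLeastFractional J1 a) (hJ2 : AtLeastFractional J2 b)
    (hpsup : 1 + 4 * a * b / (a + b) ≤ p) :
    0 < nuZero2 J1 J2 p ∧
      ∃ C : ℝ, 0 < C ∧ ∀ u : ℤ × ℤ → ℂ, MemL2two u →
        ppot2 p u ≤ C * (mass2 u) ^ ((p - 1) / 2) * pairing2 J1 J2 u := by
  have hp : 1 < p := (lt_add_of_pos_right 1 (by positivity)).trans_le hpsup
  obtain ⟨C, hC, h_GN⟩ := exists_ppot2_le hJ1pos hJ2pos hJ1sum hJ2sum ha hb hJ1 hJ2 hpsup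
  exact ⟨nuZero2_pos_of_le hp hC h_GN, C, hC, h_GN⟩

theorem stmt14 (p : ℝ) (hp : 1 < p) (J1 J2 : ℕ → ℝ)
    (hJ1pos : ∀ k, 0 ≤ J1 k) (hJ2pos : ∀ k, 0 ≤ J2 k)
    (hJ1sum : Summable fun k : ℕ => J1 (k + 1)) (hJ2sum : Summable fun k : ℕ => J2 (k + 1))
    (hJ11 : 0 < J1 1) (hJ21 : 0 < J2 1)
    (α₁ α₂ : ℝ≥0∞) (hα₁ : 0 < α₁) (hα₂ : 0 < α₂) (hαord : α₂ ≤ α₁)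
    (horder1 : JOrder1 J1 α₁) (horder2 : JOrder1 J2 α₂)
    (hpsup : 1 + 4 * alphaPrime α₁ * alphaPrime α₂ / (alphaPrime α₁ + alphaPrime α₂) ≤ p) :
    0 < nuZero2 J1 J2 p ∧
      ∃ C : ℝ, 0 < C ∧ ∀ u : ℤ × ℤ → ℂ, MemL2two u →
        ppot2 p u ≤ C * (mass2 u) ^ ((p - 1) / 2) * pairing2 J1 J2 u :=
  stmt14_general p J1 J2 hJ1pos hJ2pos hJ1sum hJ2sum _ _ (alphaPrime_pos hα₁) (alphaPrime_pos hα₂)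
    (horder1.atLeastFractional hJ11) (horder2.atLeastFractional hJ21) hpsup
end
end

section
/- For every α ∈ (0,∞) there exists a constant C = C(α) > 0 such that for all t ∈ ℝ and all φ ∈ ℓ¹(Z), ‖U(t)φ‖_{ℓ^∞(Z)} ≤ C (1 + |t|)^{−ρ} ‖φ‖_{ℓ¹(Z)}, where ρ = ρ₊ = 1/3 if α ∈ (1,∞) and ρ = ρ₋ = 1/2 if α ∈ (0,1]. -/
open scoped BigOperators ENNReal
open Filter Topology MeasureTheory

noncomputable section

/-- The symbol `σ(ξ) = Σ_{k=1}^∞ sin²(kξ/2) / k^{1+α}` for `J_k = k^{-(1+α)}` on `ℤ`. -/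
def sigma1 (α : ℝ) (ξ : ℝ) : ℝ :=
  ∑' k : ℕ, Real.sin (((k : ℝ) + 1) * ξ / 2) ^ 2 / ((k : ℝ) + 1) ^ (1 + α)

/-- The kernel `(K_t)_n = (1/(2π)) ∫_{-π}^{π} e^{i(nξ - σ(ξ)t)} dξ`. -/
def Kker (α t : ℝ) (n : ℤ) : ℂ :=
  (2 * Real.pi)⁻¹ •
    ∫ ξ in (-Real.pi)..Real.pi, Complex.exp (Complex.I * (((n : ℝ) * ξ - sigma1 α ξ * t) : ℝ))

/-- The propagator `(U(t)φ)_n = Σ_m (K_t)_{n-m} φ_m`. -/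
def Uprop (α t : ℝ) (φ : ℤ → ℂ) (n : ℤ) : ℂ :=
  ∑' m : ℤ, Kker α t (n - m) * φ m

/-!
For `|t| ≤ 1` the trivial bound `|K_t(n)| ≤ 1` suffices, so let `|t| ≥ 1`; it is enough to bound
`∫₀^π exp (i (n x - σ(x) t)) dx` uniformly in `n`. The analytic input is van der Corput's second
derivative test, in a form that needs no derivatives: a phase that is strongly convex with modulus
`m` has an oscillatory integral of size at most `8 / √m`.

For `α ≤ 1` the symbol is strongly concave on `[0, 2π]`. Indeed `k ^ (-(1 + α))` is a mixture, with
positive weights, of the coefficients `(1 - r ^ k) / k ^ 2`, `0 ≤ r < 1`, and the second derivative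
of `∑ sin² (k x / 2) (1 - r ^ k) / k ^ 2` is a negative multiple of a Poisson kernel. This gives the
decay `|t| ^ (-1/2)`.

For `1 < α` the derivative of `σ` is half of `S(x) = ∑ sin (k x) / k ^ α`, and `k ^ (-α)` is a
mixture of the coefficients `r ^ k / k`, so that `S` is concave on `[0, π]` and strongly concave on
compact subintervals of `(0, π)`. As `S` vanishes at both ends, it has an interior maximum `x₀`. At
distance `δ` from `x₀` the slope of `S` is at least of order `δ` in absolute value, so `σ` is
strongly convex to the left of `x₀ - δ` and strongly concave to the right of `x₀ + δ`, with modulus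
of order `δ`. The choice `δ = |t| ^ (-1/3)` balances the contributions `δ` and `(δ |t|) ^ (-1/2)`.
-/

open Set
open scoped Real

section StrongConvexity

variable {E : Type*} [NormedAddCommGroup E] [NormedSpace ℝ E] {s : Set E} {m : ℝ} {f : E → ℝ}

theorem strongConvexOn_subset {t : Set E} (hf : StrongConvexOn t m f) (hst : s ⊆ t)
    (hs : Convex ℝ s) : StrongConvexOn s m f :=
  ⟨hs, fun _ hx _ hy => hf.2 (hst hx) (hst hy)⟩

theorem strongConvexOn_comp_neg (hf : StrongConvexOn s m f) :
    StrongConvexOn (-s) m fun x => f (-x) := by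
  refine ⟨hf.1.neg, fun x hx y hy p q hp hq hpq => ?_⟩
  have key := hf.2 hx hy hp hq hpq
  rwa [smul_neg, smul_neg, ← neg_add, neg_sub_neg, norm_sub_rev] at key

theorem strongConvexOn_const_mul {c : ℝ} (hf : StrongConvexOn s m f) (hc : 0 ≤ c) :
    StrongConvexOn s (c * m) fun x => c * f x := by
  refine ⟨hf.1, fun x hx y hy p q hp hq hpq => ?_⟩
  have := mul_le_mul_of_nonneg_left (hf.2 hx hy hp hq hpq) hc
  simp only [smul_eq_mul] at this ⊢
  linarith

theorem strongConvexOn_linear_add (hf : StrongConvexOn s m f) (L : E →ₗ[ℝ] ℝ) :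
    StrongConvexOn s m fun x => L x + f x := by
  refine ⟨hf.1, fun x hx y hy p q hp hq hpq => ?_⟩
  have := hf.2 hx hy hp hq hpq
  simp only [smul_eq_mul, map_add, map_smul] at this ⊢
  linarith

theorem strongConcaveOn_subset {t : Set E} (hf : StrongConcaveOn t m f) (hst : s ⊆ t)
    (hs : Convex ℝ s) : StrongConcaveOn s m f :=
  ⟨hs, fun _ hx _ hy => hf.2 (hst hx) (hst hy)⟩

theorem strongConcaveOn_congr {g : E → ℝ} (hf : StrongConcaveOn s m f) (hfg : EqOn f g s) :
    StrongConcaveOn s m g := by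
  refine ⟨hf.1, fun x hx y hy p q hp hq hpq => ?_⟩
  rw [← hfg hx, ← hfg hy, ← hfg (hf.1 hx hy hp hq hpq)]
  exact hf.2 hx hy hp hq hpq

theorem strongConcaveOn_const_mul {c : ℝ} (hf : StrongConcaveOn s m f) (hc : 0 ≤ c) :
    StrongConcaveOn s (c * m) fun x => c * f x := by
  refine ⟨hf.1, fun x hx y hy p q hp hq hpq => ?_⟩
  have := mul_le_mul_of_nonneg_left (hf.2 hx hy hp hq hpq) hc
  simp only [smul_eq_mul] at this ⊢
  linarith

theorem strongConcaveOn_comp_neg (hf : StrongConcaveOn s m f) :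
    StrongConcaveOn (-s) m fun x => f (-x) := by
  refine ⟨hf.1.neg, fun x hx y hy p q hp hq hpq => ?_⟩
  have key := hf.2 hx hy hp hq hpq
  rwa [smul_neg, smul_neg, ← neg_add, neg_sub_neg, norm_sub_rev] at key

theorem half_mul_sub_mul_sub_le_of_strongConvexOn {s : Set ℝ} {f : ℝ → ℝ} {m a x y : ℝ}
    (hf : StrongConvexOn s m f) (ha : a ∈ s) (hy : y ∈ s) (hax : a < x) (hxy : x ≤ y)
    (hmin : f a ≤ f x) : m / 2 * (y - a) * (y - x) ≤ f y - f x := by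
  have hay : 0 < y - a := sub_pos.2 (hax.trans_le hxy)
  have key := hf.2 ha hy (div_nonneg (sub_nonneg.2 hxy) hay.le)
    (div_nonneg (sub_nonneg.2 hax.le) hay.le) (by field_simp; ring)
  have combo : ((y - x) / (y - a)) • a + ((x - a) / (y - a)) • y = x := by
    simp only [smul_eq_mul]
    field_simp
    ring
  rw [combo] at key
  simp only [Real.norm_eq_abs, sq_abs, smul_eq_mul] at key
  have cleared : (y - a) * f x ≤
      (y - x) * f a + (x - a) * f y - (x - a) * (m / 2 * (y - a) * (y - x)) := by
    refine (mul_le_mul_of_nonneg_left key hay.le).trans_eq ?_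
    field_simp
    ring
  have scaled : (x - a) * (m / 2 * (y - a) * (y - x)) ≤ (x - a) * (f y - f x) := by
    linarith [mul_le_mul_of_nonneg_left hmin (sub_nonneg.2 hxy)]
  exact le_of_mul_le_mul_left scaled (sub_pos.2 hax)

theorem strongConcaveOn_of_antitoneOn_deriv {D : Set ℝ} {g G : ℝ → ℝ} (hD : Convex ℝ D)
    (hg : ContinuousOn g D) (hderiv : ∀ x ∈ interior D, HasDerivAt g (G x) x)
    (hanti : AntitoneOn (fun x => G x + m * x) (interior D)) : StrongConcaveOn D m g := by
  simp only [strongConcaveOn_iff_convex, Real.norm_eq_abs, sq_abs]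
  have deriv_eq : ∀ x ∈ interior D,
      HasDerivAt (fun x => g x + m / 2 * x ^ 2) (G x + m * x) x := fun x hx =>
    ((hderiv x hx).add ((hasDerivAt_pow 2 x).const_mul (m / 2))).congr_deriv (by push_cast; ring)
  exact AntitoneOn.concaveOn_of_deriv hD (by fun_prop)
    (fun x hx => (deriv_eq x hx).differentiableAt.differentiableWithinAt)
    (hanti.congr fun x hx => (deriv_eq x hx).deriv.symm)

theorem strongConcaveOn_of_hasDerivAt2_le {D : Set ℝ} {f f' f'' : ℝ → ℝ} {m : ℝ} (hD : Convex ℝ D)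
    (hf : ContinuousOn f D) (hf' : ∀ x ∈ interior D, HasDerivAt f (f' x) x)
    (hf'' : ∀ x ∈ interior D, HasDerivAt f' (f'' x) x) (hm : ∀ x ∈ interior D, f'' x ≤ -m) :
    StrongConcaveOn D m f := by
  have deriv_add : ∀ x ∈ interior D, HasDerivAt (fun x => f' x + m * x) (f'' x + m) x :=
    fun x hx => (hf'' x hx).add (hasDerivAt_const_mul m)
  refine strongConcaveOn_of_antitoneOn_deriv hD hf hf'
    (antitoneOn_of_hasDerivWithinAt_nonpos (f' := fun x => f'' x + m) hD.interior
      (fun x hx => (deriv_add x hx).continuousAt.continuousWithinAt) (fun x hx => ?_)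
      fun x hx => ?_)
  · exact (deriv_add x (interior_subset hx)).hasDerivWithinAt
  · linarith [hm x (interior_subset hx)]

end StrongConvexity

theorem norm_sum_smul_sub_le_of_antitone {E : Type*} [NormedAddCommGroup E] [NormedSpace ℝ E]
    {w : ℕ → ℝ} {e : ℕ → E} {B : ℝ} {n : ℕ} (hw : ∀ j < n, w (j + 1) ≤ w j) (hn : 0 ≤ w n)
    (he : ∀ j, ‖e j‖ ≤ B) :
    ‖∑ j ∈ Finset.range (n + 1), w j • (e (j + 1) - e j)‖ ≤ 2 * w 0 * B := by
  have abel : ∀ k, ∑ j ∈ Finset.range (k + 1), w j • (e (j + 1) - e j) =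
      w k • e (k + 1) - w 0 • e 0 + ∑ j ∈ Finset.range k, (w j - w (j + 1)) • e (j + 1) := by
    intro k
    induction k with
    | zero => simp [smul_sub]
    | succ k ih =>
      rw [Finset.sum_range_succ, ih, Finset.sum_range_succ (fun j => (w j - w (j + 1)) • e (j + 1))]
      module
  have term : ∀ {c : ℝ} (j : ℕ), 0 ≤ c → ‖c • e j‖ ≤ c * B := fun {c} j hc => by
    rw [norm_smul, Real.norm_of_nonneg hc]
    exact mul_le_mul_of_nonneg_left (he j) hc
  have variation : ‖∑ j ∈ Finset.range n, (w j - w (j + 1)) • e (j + 1)‖ ≤ (w 0 - w n) * B := by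
    rw [← Finset.sum_range_sub' w n, Finset.sum_mul]
    exact norm_sum_le_of_le _ fun j hj =>
      term _ (sub_nonneg.2 (hw j (Finset.mem_range.1 hj)))
  have anti : w n ≤ w 0 := by
    have := Finset.sum_nonneg fun j hj => sub_nonneg.2 (hw j (Finset.mem_range.1 hj))
    rw [Finset.sum_range_sub' w n] at this
    linarith
  rw [abel]
  calc _ ≤ ‖w n • e (n + 1)‖ + ‖w 0 • e 0‖ +
          ‖∑ j ∈ Finset.range n, (w j - w (j + 1)) • e (j + 1)‖ :=
        (norm_add_le _ _).trans (add_le_add_left (norm_sub_le _ _) _)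
    _ ≤ w n * B + w 0 * B + (w 0 - w n) * B :=
        add_le_add (add_le_add (term _ hn) (term _ (hn.trans anti))) variation
    _ = 2 * w 0 * B := by ring

theorem norm_exp_I_mul_sub_exp_I_mul_le (u v : ℝ) :
    ‖Complex.exp (Complex.I * u) - Complex.exp (Complex.I * v)‖ ≤ |u - v| := by
  have factor : Complex.exp (Complex.I * u) - Complex.exp (Complex.I * v) =
      Complex.exp (Complex.I * v) * (Complex.exp (Complex.I * (u - v : ℝ)) - 1) := by
    rw [mul_sub, ← Complex.exp_add, mul_one]
    push_cast
    ring_nf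
  rw [factor, norm_mul, Complex.norm_exp_I_mul_ofReal, one_mul]
  exact Real.norm_exp_I_mul_ofReal_sub_one_le

/-- The oscillatory integral `∫ₐᵇ e^{i f(x)} dx` of a real phase `f`. -/
def oscIntegral (f : ℝ → ℝ) (a b : ℝ) : ℂ :=
  ∫ x in a..b, Complex.exp (Complex.I * (f x : ℝ))

section OscIntegral

variable {f : ℝ → ℝ} {a b c : ℝ}

theorem continuousOn_exp_I_mul {s : Set ℝ} (hf : ContinuousOn f s) :
    ContinuousOn (fun x => Complex.exp (Complex.I * (f x : ℝ))) s :=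
  Complex.continuous_exp.comp_continuousOn
    (continuousOn_const.mul (Complex.continuous_ofReal.comp_continuousOn hf))

theorem intervalIntegrable_exp_I_mul (hab : a ≤ b) (hf : ContinuousOn f (Icc a b)) :
    IntervalIntegrable (fun x => Complex.exp (Complex.I * (f x : ℝ))) volume a b :=
  (continuousOn_exp_I_mul hf).intervalIntegrable_of_Icc hab

theorem norm_oscIntegral_le_sub (f : ℝ → ℝ) (hab : a ≤ b) : ‖oscIntegral f a b‖ ≤ b - a := by
  simpa [oscIntegral, abs_of_nonneg (sub_nonneg.2 hab)] using
    intervalIntegral.norm_integral_le_of_norm_le_const (a := a) (b := b) (C := 1)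
      fun x _ => (Complex.norm_exp_I_mul_ofReal (f x)).le

theorem oscIntegral_add_adjacent (hab : a ≤ b) (hbc : b ≤ c) (hf : ContinuousOn f (Icc a c)) :
    oscIntegral f a b + oscIntegral f b c = oscIntegral f a c :=
  intervalIntegral.integral_add_adjacent_intervals
    (intervalIntegrable_exp_I_mul hab (hf.mono (Icc_subset_Icc_right hbc)))
    (intervalIntegrable_exp_I_mul hbc (hf.mono (Icc_subset_Icc_left hab)))

theorem norm_oscIntegral_neg (f : ℝ → ℝ) (a b : ℝ) :
    ‖oscIntegral (-f) a b‖ = ‖oscIntegral f a b‖ := by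
  have conj : oscIntegral (-f) a b = (starRingEnd ℂ) (oscIntegral f a b) := by
    rw [oscIntegral, oscIntegral, ← intervalIntegral.intervalIntegral_conj]
    congr with x
    simp [← Complex.exp_conj]
  rw [conj, RCLike.norm_conj]

theorem oscIntegral_comp_neg (f : ℝ → ℝ) (a b : ℝ) :
    oscIntegral (fun x => f (-x)) a b = oscIntegral f (-b) (-a) :=
  intervalIntegral.integral_comp_neg fun x => Complex.exp (Complex.I * (f x : ℝ))

theorem oscIntegral_affine {m : ℝ} (hm : m ≠ 0) (v : ℝ) :
    oscIntegral (fun x => v + m * (x - a)) a b =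
      m⁻¹ • (-Complex.I *
        (Complex.exp (Complex.I * (v + m * (b - a) : ℝ)) - Complex.exp (Complex.I * v))) := by
  have deriv : ∀ x ∈ uIcc a b, HasDerivAt
      (fun x : ℝ => m⁻¹ • (-Complex.I * Complex.exp (Complex.I * (v + m * (x - a) : ℝ))))
      (Complex.exp (Complex.I * (v + m * (x - a) : ℝ))) x := by
    intro x _
    have affine : HasDerivAt (fun x : ℝ => v + m * (x - a)) m x := by
      simpa using (((hasDerivAt_id x).sub_const a).const_mul m).const_add v
    refine ((((affine.ofReal_comp).const_mul Complex.I).cexp.const_mul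
      (-Complex.I)).const_smul m⁻¹).congr_deriv ?_
    have : (m : ℂ) ≠ 0 := Complex.ofReal_ne_zero.2 hm
    rw [Complex.real_smul, Complex.ofReal_inv]
    field_simp
    simp
  rw [oscIntegral, intervalIntegral.integral_eq_sub_of_hasDerivAt deriv
    (continuousOn_exp_I_mul (by fun_prop)).intervalIntegrable]
  simp [mul_sub]

theorem norm_oscIntegral_sub_chord_le (hab : a < b) (hf : ContinuousOn f (Icc a b))
    (hmono : MonotoneOn f (Icc a b)) (hlt : f a < f b) :
    ‖oscIntegral f a b - ((b - a) / (f b - f a)) •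
      (-Complex.I * (Complex.exp (Complex.I * f b) - Complex.exp (Complex.I * f a)))‖ ≤
      (b - a) * (f b - f a) := by
  set m := (f b - f a) / (b - a) with hm
  have m_pos : 0 < m := div_pos (sub_pos.2 hlt) (sub_pos.2 hab)
  have m_mul : m * (b - a) = f b - f a := div_mul_cancel₀ _ (sub_pos.2 hab).ne'
  have chord := oscIntegral_affine (a := a) (b := b) m_pos.ne' (f a)
  rw [m_mul, add_sub_cancel, hm, inv_div, ← hm] at chord
  have close : ∀ x ∈ uIoc a b, ‖Complex.exp (Complex.I * f x) -
      Complex.exp (Complex.I * (f a + m * (x - a) : ℝ))‖ ≤ f b - f a := by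
    intro x hx
    rw [uIoc_of_le hab.le] at hx
    have left := hmono (left_mem_Icc.2 hab.le) (Ioc_subset_Icc_self hx) hx.1.le
    have right := hmono (Ioc_subset_Icc_self hx) (right_mem_Icc.2 hab.le) hx.2
    have chord_nonneg : 0 ≤ m * (x - a) := mul_nonneg m_pos.le (sub_nonneg.2 hx.1.le)
    have chord_le : m * (x - a) ≤ m * (b - a) :=
      mul_le_mul_of_nonneg_left (sub_le_sub_right hx.2 a) m_pos.le
    refine (norm_exp_I_mul_sub_exp_I_mul_le _ _).trans (abs_le.2 ⟨?_, ?_⟩) <;> linarith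
  have integrable_chord := intervalIntegrable_exp_I_mul hab.le
    (f := fun x => f a + m * (x - a)) (by fun_prop)
  rw [← chord, oscIntegral, oscIntegral,
    ← intervalIntegral.integral_sub (intervalIntegrable_exp_I_mul hab.le hf) integrable_chord]
  refine (intervalIntegral.norm_integral_le_of_norm_le_const close).trans_eq ?_
  rw [abs_of_pos (sub_pos.2 hab), mul_comm]

theorem le_div_of_monotoneOn_sub {δ x y : ℝ} {s : Set ℝ}
    (hslope : MonotoneOn (fun z => f z - δ * z) s) (hx : x ∈ s) (hy : y ∈ s) (hxy : x < y) :
    δ ≤ (f y - f x) / (y - x) := by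
  have := hslope hx hy hxy.le
  rw [le_div_iff₀ (sub_pos.2 hxy)]
  linarith

section Partition

variable {δ : ℝ} {n : ℕ} {x : ℕ → ℝ}

theorem mem_Icc_of_strictMono (hx : StrictMono x) {j : ℕ} (hj : j ≤ n) : x j ∈ Icc (x 0) (x n) :=
  ⟨hx.monotone j.zero_le, hx.monotone hj⟩

theorem norm_sum_chord_le (hx : StrictMono x) (hδ : 0 < δ)
    (hconv : ConvexOn ℝ (Icc (x 0) (x (n + 1))) f)
    (hslope : MonotoneOn (fun y => f y - δ * y) (Icc (x 0) (x (n + 1)))) :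
    ‖∑ j ∈ Finset.range (n + 1), ((x (j + 1) - x j) / (f (x (j + 1)) - f (x j))) •
      (-Complex.I * (Complex.exp (Complex.I * f (x (j + 1))) -
        Complex.exp (Complex.I * f (x j))))‖ ≤ 2 / δ := by
  set w : ℕ → ℝ := fun j => ((f (x (j + 1)) - f (x j)) / (x (j + 1) - x j))⁻¹ with w_def
  set e : ℕ → ℂ := fun j => -Complex.I * Complex.exp (Complex.I * f (x j)) with e_def
  have slope_ge : ∀ {j}, j < n + 1 → δ ≤ (f (x (j + 1)) - f (x j)) / (x (j + 1) - x j) :=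
    fun {j} hj => le_div_of_monotoneOn_sub hslope (mem_Icc_of_strictMono hx hj.le)
      (mem_Icc_of_strictMono hx hj) (hx j.lt_succ_self)
  have w_anti : ∀ j < n, w (j + 1) ≤ w j := fun j hj =>
    inv_anti₀ (hδ.trans_le (slope_ge (by lia))) (hconv.slope_mono_adjacent
      (mem_Icc_of_strictMono hx (by lia)) (mem_Icc_of_strictMono hx (by lia))
      (hx j.lt_succ_self) (hx (j + 1).lt_succ_self))
  have w_last : 0 ≤ w n := inv_nonneg.2 (hδ.le.trans (slope_ge n.lt_succ_self))
  have e_norm : ∀ j, ‖e j‖ ≤ 1 := fun j => by simp [e_def, Complex.norm_exp_I_mul_ofReal]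
  calc _ = ‖∑ j ∈ Finset.range (n + 1), w j • (e (j + 1) - e j)‖ := by
        simp only [w_def, e_def, inv_div, mul_sub]
    _ ≤ 2 * w 0 * 1 := norm_sum_smul_sub_le_of_antitone w_anti w_last e_norm
    _ ≤ 2 / δ := by
        rw [mul_one, div_eq_mul_inv]
        exact mul_le_mul_of_nonneg_left (inv_anti₀ hδ (slope_ge n.succ_pos)) zero_le_two

theorem norm_oscIntegral_le_add_sum (hx : StrictMono x) (hδ : 0 < δ)
    (hf : ContinuousOn f (Icc (x 0) (x (n + 1)))) (hconv : ConvexOn ℝ (Icc (x 0) (x (n + 1))) f)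
    (hslope : MonotoneOn (fun y => f y - δ * y) (Icc (x 0) (x (n + 1)))) :
    ‖oscIntegral f (x 0) (x (n + 1))‖ ≤
      2 / δ + ∑ j ∈ Finset.range (n + 1), (x (j + 1) - x j) * (f (x (j + 1)) - f (x j)) := by
  have sub_Icc : ∀ {j}, j < n + 1 → Icc (x j) (x (j + 1)) ⊆ Icc (x 0) (x (n + 1)) := fun hj =>
    Icc_subset_Icc (mem_Icc_of_strictMono hx hj.le).1 (mem_Icc_of_strictMono hx hj).2
  have f_mono : MonotoneOn f (Icc (x 0) (x (n + 1))) := by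
    simpa using hslope.add ((monotone_id.const_mul hδ.le).monotoneOn _)
  set chord : ℕ → ℂ := fun j => ((x (j + 1) - x j) / (f (x (j + 1)) - f (x j))) •
    (-Complex.I * (Complex.exp (Complex.I * f (x (j + 1))) - Complex.exp (Complex.I * f (x j))))
  have error : ∀ j ∈ Finset.range (n + 1), ‖oscIntegral f (x j) (x (j + 1)) - chord j‖ ≤
      (x (j + 1) - x j) * (f (x (j + 1)) - f (x j)) := by
    intro j hj
    have hj := Finset.mem_range.1 hj
    have slope_pos := hδ.trans_le (le_div_of_monotoneOn_sub hslope
      (mem_Icc_of_strictMono hx hj.le) (mem_Icc_of_strictMono hx hj) (hx j.lt_succ_self))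
    exact norm_oscIntegral_sub_chord_le (hx j.lt_succ_self) (hf.mono (sub_Icc hj))
      (f_mono.mono (sub_Icc hj))
      (sub_pos.1 ((div_pos_iff_of_pos_right (sub_pos.2 (hx j.lt_succ_self))).1 slope_pos))
  have split : ∑ j ∈ Finset.range (n + 1), oscIntegral f (x j) (x (j + 1)) =
      oscIntegral f (x 0) (x (n + 1)) :=
    intervalIntegral.sum_integral_adjacent_intervals fun j hj =>
      intervalIntegrable_exp_I_mul (hx j.lt_succ_self).le (hf.mono (sub_Icc hj))
  rw [← split, ← add_sub_cancel (∑ j ∈ Finset.range (n + 1), chord j)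
    (∑ j ∈ Finset.range (n + 1), oscIntegral f (x j) (x (j + 1))), ← Finset.sum_sub_distrib]
  exact (norm_add_le _ _).trans
    (add_le_add (norm_sum_chord_le hx hδ hconv hslope) (norm_sum_le_of_le _ error))

end Partition

/- On a partition of step `h`, replacing `f` by its chords costs `O(h)`; the chord integrals have
monotone weights, and Abel summation stands in for the second mean value theorem. -/
theorem norm_oscIntegral_le_of_monotoneOn_sub (hab : a ≤ b) {δ : ℝ} (hδ : 0 < δ)
    (hf : ContinuousOn f (Icc a b)) (hconv : ConvexOn ℝ (Icc a b) f)
    (hslope : MonotoneOn (fun x => f x - δ * x) (Icc a b)) :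
    ‖oscIntegral f a b‖ ≤ 2 / δ := by
  rcases hab.eq_or_lt with rfl | hab
  · simpa [oscIntegral] using (div_pos two_pos hδ).le
  have bound : ∀ n : ℕ, ‖oscIntegral f a b‖ ≤ 2 / δ + (b - a) * (f b - f a) / (n + 1) := by
    intro n
    set h := (b - a) / (n + 1) with h_def
    have h_pos : 0 < h := div_pos (sub_pos.2 hab) (by positivity)
    set x : ℕ → ℝ := fun j => a + j * h with x_def
    have x_step : ∀ j, x (j + 1) - x j = h := fun j => by simp only [x_def]; push_cast; ring
    have x_zero : x 0 = a := by simp [x_def]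
    have x_last : x (n + 1) = b := by
      simp only [x_def, h_def]
      push_cast
      field_simp
      ring
    have key := norm_oscIntegral_le_add_sum (f := f) (n := n) (x := x)
      (strictMono_nat_of_lt_succ fun j => by linarith [x_step j]) hδ
    simp only [x_step, ← Finset.mul_sum, Finset.sum_range_sub fun j => f (x j), x_zero,
      x_last] at key
    exact (key hf hconv hslope).trans_eq (by rw [h_def, div_mul_eq_mul_div])
  refine ge_of_tendsto' (x := atTop) ?_ bound
  simpa [div_eq_mul_inv] using
    ((tendsto_one_div_add_atTop_nhds_zero_nat (𝕜 := ℝ)).const_mul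
      ((b - a) * (f b - f a))).const_add (2 / δ)

theorem norm_oscIntegral_le_of_strongConvexOn_of_min {m : ℝ} (hab : a ≤ b) (hm : 0 < m)
    (hf : ContinuousOn f (Icc a b)) (hconv : StrongConvexOn (Icc a b) m f)
    (hmin : IsMinOn f (Icc a b) a) : ‖oscIntegral f a b‖ ≤ 4 / √m := by
  set ε := 2 / √m with ε_def
  have ε_pos : 0 < ε := by positivity
  have double_ε : 4 / √m = ε + ε := by rw [ε_def]; ring
  rcases le_total b (a + ε) with hb | hb
  · linarith [norm_oscIntegral_le_sub f hab]
  have ha : a ≤ a + ε := by linarith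
  have sub_Icc : Icc (a + ε) b ⊆ Icc a b := Icc_subset_Icc_left ha
  have slope : MonotoneOn (fun x => f x - m / 2 * ε * x) (Icc (a + ε) b) := by
    intro x hx y hy hxy
    have growth := half_mul_sub_mul_sub_le_of_strongConvexOn hconv (left_mem_Icc.2 hab)
      (sub_Icc hy) (by linarith [hx.1]) hxy (hmin (sub_Icc hx))
    have : m / 2 * ε * (y - x) ≤ m / 2 * (y - a) * (y - x) := by
      have : ε ≤ y - a := by linarith [hy.1]
      have : 0 ≤ y - x := sub_nonneg.2 hxy
      gcongr
    simp only
    linarith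
  have near := norm_oscIntegral_le_sub f ha
  have far := norm_oscIntegral_le_of_monotoneOn_sub hb (by positivity) (hf.mono sub_Icc)
    ((UniformConvexOn.convexOn hconv fun _ => by positivity).subset sub_Icc (convex_Icc _ _)) slope
  have far_eq : 2 / (m / 2 * ε) = ε := by
    rw [ε_def]
    field_simp
    rw [Real.sq_sqrt hm.le]
  rw [← oscIntegral_add_adjacent ha hb hf]
  linarith [norm_add_le (oscIntegral f a (a + ε)) (oscIntegral f (a + ε) b)]

theorem norm_oscIntegral_le_of_strongConvexOn {m : ℝ} (hab : a ≤ b) (hm : 0 < m)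
    (hf : ContinuousOn f (Icc a b)) (hconv : StrongConvexOn (Icc a b) m f) :
    ‖oscIntegral f a b‖ ≤ 8 / √m := by
  obtain ⟨c, hc, hmin⟩ := isCompact_Icc.exists_isMinOn (nonempty_Icc.2 hab) hf
  have right_sub : Icc c b ⊆ Icc a b := Icc_subset_Icc_left hc.1
  have left_sub : Icc a c ⊆ Icc a b := Icc_subset_Icc_right hc.2
  have right := norm_oscIntegral_le_of_strongConvexOn_of_min hc.2 hm (hf.mono right_sub)
    (strongConvexOn_subset hconv right_sub (convex_Icc _ _)) (hmin.on_subset right_sub)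
  have left : ‖oscIntegral f a c‖ ≤ 4 / √m := by
    have reflect := strongConvexOn_comp_neg (strongConvexOn_subset hconv left_sub (convex_Icc _ _))
    rw [Set.neg_Icc] at reflect
    have maps : MapsTo Neg.neg (Icc (-c) (-a)) (Icc a c) := fun x hx =>
      ⟨le_neg.2 hx.2, neg_le.2 hx.1⟩
    rw [← neg_neg a, ← neg_neg c, ← oscIntegral_comp_neg]
    refine norm_oscIntegral_le_of_strongConvexOn_of_min (neg_le_neg hc.1) hm
      ((hf.mono left_sub).comp continuousOn_neg maps) reflect fun x hx => ?_
    simpa using hmin (left_sub (maps hx))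
  rw [← oscIntegral_add_adjacent hc.1 hc.2 hf]
  calc _ ≤ ‖oscIntegral f a c‖ + ‖oscIntegral f c b‖ := norm_add_le _ _
    _ ≤ 4 / √m + 4 / √m := add_le_add left right
    _ = 8 / √m := by ring

theorem norm_oscIntegral_phase_le_of_strongConvexOn {m n t : ℝ} (hab : a ≤ b) (hm : 0 < m)
    (ht : t ≠ 0) (hf : ContinuousOn f (Icc a b)) (hconv : StrongConvexOn (Icc a b) m f) :
    ‖oscIntegral (fun x => n * x - f x * t) a b‖ ≤ 8 / √(m * |t|) := by
  have convex_phase : ∀ k s : ℝ, 0 < s →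
      ‖oscIntegral (fun x => k * x + s * f x) a b‖ ≤ 8 / √(s * m) := fun k s hs =>
    norm_oscIntegral_le_of_strongConvexOn hab (mul_pos hs hm) (by fun_prop)
      (strongConvexOn_linear_add (strongConvexOn_const_mul hconv hs.le) (LinearMap.mul ℝ ℝ k))
  rw [mul_comm m]
  rcases ht.lt_or_gt with ht | ht
  · rw [abs_of_neg ht]
    convert convex_phase n (-t) (neg_pos.2 ht) using 4 with x
    ring
  · rw [abs_of_pos ht, ← norm_oscIntegral_neg]
    convert convex_phase (-n) t ht using 4 with x
    simp only [Pi.neg_apply]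
    ring

theorem norm_oscIntegral_phase_le_of_strongConcaveOn {m n t : ℝ} (hab : a ≤ b) (hm : 0 < m)
    (ht : t ≠ 0) (hf : ContinuousOn f (Icc a b)) (hconc : StrongConcaveOn (Icc a b) m f) :
    ‖oscIntegral (fun x => n * x - f x * t) a b‖ ≤ 8 / √(m * |t|) := by
  simpa using norm_oscIntegral_phase_le_of_strongConvexOn (n := n) hab hm (neg_ne_zero.2 ht)
    hf.neg (UniformConcaveOn.neg hconc)

end OscIntegral

section ThirdDerivativeTest

variable {g G : ℝ → ℝ} {a b x₀ m r δ n t : ℝ}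

/- Near its maximum the concave function `G` drops by `m δ² / 4` over `[x₀ + δ / 2, x₀ + δ]`; by
concavity it keeps falling at least at that rate. -/
theorem strongConcaveOn_of_deriv_max (hδ : 0 < δ) (hδr : δ ≤ r) (hb : x₀ + r ≤ b)
    (hg : ContinuousOn g (Icc x₀ b)) (hderiv : ∀ x ∈ Ioo x₀ b, HasDerivAt g (G x) x)
    (hG : ConcaveOn ℝ (Icc x₀ b) G) (hmax : IsMaxOn G (Icc x₀ b) x₀)
    (hstrong : StrongConcaveOn (Icc x₀ (x₀ + r)) m G) :
    StrongConcaveOn (Icc (x₀ + δ) b) (m / 2 * δ) g := by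
  have sub_Icc : Icc (x₀ + δ) b ⊆ Icc x₀ b := Icc_subset_Icc_left (by linarith)
  refine strongConcaveOn_of_antitoneOn_deriv (G := G) (convex_Icc _ _) (hg.mono sub_Icc)
    (fun x hx => ?_) fun x hx y hy hxy => ?_
  · rw [interior_Icc] at hx
    exact hderiv x ⟨by linarith [hx.1], hx.2⟩
  rw [interior_Icc] at hx hy
  rcases hxy.eq_or_lt with rfl | hxy
  · exact le_rfl
  set h : ℝ → ℝ := fun x => G x + m / 2 * δ * x with h_def
  have h_concave : ConcaveOn ℝ (Icc x₀ b) h := hG.add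
    ((LinearMap.mul ℝ ℝ (m / 2 * δ)).concaveOn (convex_Icc _ _))
  have drop : h (x₀ + δ) ≤ h (x₀ + δ / 2) := by
    have := half_mul_sub_mul_sub_le_of_strongConvexOn (UniformConcaveOn.neg hstrong)
      (a := x₀) (x := x₀ + δ / 2) (y := x₀ + δ) ⟨le_rfl, by linarith⟩ ⟨by linarith, by linarith⟩
      (by linarith) (by linarith) (neg_le_neg (hmax ⟨by linarith, by linarith⟩))
    simp only [h_def, Pi.neg_apply] at this ⊢
    linarith
  have mid_mem : x₀ + δ / 2 ∈ Icc x₀ b := ⟨by linarith, by linarith⟩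
  have x_le : h x ≤ h (x₀ + δ) := h_concave.right_le_of_le_left'' mid_mem
    ⟨by linarith [hx.1], hx.2.le⟩ (by linarith) hx.1.le drop
  exact h_concave.right_le_of_le_left'' mid_mem ⟨by linarith [hy.1], hy.2.le⟩
    (by linarith [hx.1]) hxy.le (x_le.trans drop)

theorem sqrt_mul_rpow_mul (hm : 0 < m) (ht : 0 < |t|) :
    √(m * |t| ^ (-(1 / 3) : ℝ) * |t|) = √m * |t| ^ (1 / 3 : ℝ) := by
  have power : |t| ^ (-(1 / 3) : ℝ) * |t| = (|t| ^ (1 / 3 : ℝ)) ^ 2 := by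
    rw [← Real.rpow_add_one ht.ne', ← Real.rpow_mul_natCast ht.le]
    norm_num
  rw [mul_assoc, power, Real.sqrt_mul hm.le, Real.sqrt_sq (by positivity)]

theorem norm_oscIntegral_phase_le_of_deriv_max_left (hm : 0 < m) (hr : 0 < r) (hb : x₀ + r ≤ b)
    (ht : 1 ≤ |t|) (hg : ContinuousOn g (Icc x₀ b)) (hderiv : ∀ x ∈ Ioo x₀ b, HasDerivAt g (G x) x)
    (hG : ConcaveOn ℝ (Icc x₀ b) G) (hmax : IsMaxOn G (Icc x₀ b) x₀)
    (hstrong : StrongConcaveOn (Icc x₀ (x₀ + r)) m G) :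
    ‖oscIntegral (fun x => n * x - g x * t) x₀ b‖ ≤
      (8 / √(m / 2 * r) + r) * |t| ^ (-(1 / 3) : ℝ) := by
  have t_pos : 0 < |t| := one_pos.trans_le ht
  set δ := r * |t| ^ (-(1 / 3) : ℝ) with δ_def
  have δ_pos : 0 < δ := by positivity
  have δ_le : δ ≤ r :=
    mul_le_of_le_one_right hr.le (Real.rpow_le_one_of_one_le_of_nonpos ht (by norm_num))
  have phase_cont : ContinuousOn (fun x => n * x - g x * t) (Icc x₀ b) := by fun_prop
  have near := norm_oscIntegral_le_sub (fun x => n * x - g x * t) (a := x₀) (b := x₀ + δ)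
    (by linarith)
  have far := norm_oscIntegral_phase_le_of_strongConcaveOn (n := n) (t := t) (a := x₀ + δ) (b := b)
    (by linarith) (m := m / 2 * δ) (by positivity) (abs_pos.1 t_pos)
    (hg.mono (Icc_subset_Icc_left (by linarith)))
    (strongConcaveOn_of_deriv_max δ_pos δ_le hb hg hderiv hG hmax hstrong)
  rw [δ_def, ← mul_assoc (m / 2), sqrt_mul_rpow_mul (by positivity) t_pos, ← div_div,
    div_eq_mul_inv _ (|t| ^ (1 / 3 : ℝ)), ← Real.rpow_neg t_pos.le, ← δ_def] at far
  rw [← oscIntegral_add_adjacent (b := x₀ + δ) (by linarith) (by linarith) phase_cont, add_mul]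
  linarith [norm_add_le (oscIntegral (fun x => n * x - g x * t) x₀ (x₀ + δ))
    (oscIntegral (fun x => n * x - g x * t) (x₀ + δ) b)]

theorem norm_oscIntegral_phase_le_of_deriv_max_right (hm : 0 < m) (hr : 0 < r) (ha : a ≤ x₀ - r)
    (ht : 1 ≤ |t|) (hg : ContinuousOn g (Icc a x₀)) (hderiv : ∀ x ∈ Ioo a x₀, HasDerivAt g (G x) x)
    (hG : ConcaveOn ℝ (Icc a x₀) G) (hmax : IsMaxOn G (Icc a x₀) x₀)
    (hstrong : StrongConcaveOn (Icc (x₀ - r) x₀) m G) :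
    ‖oscIntegral (fun x => n * x - g x * t) a x₀‖ ≤
      (8 / √(m / 2 * r) + r) * |t| ^ (-(1 / 3) : ℝ) := by
  have maps : MapsTo Neg.neg (Icc (-x₀) (-a)) (Icc a x₀) := fun x hx =>
    ⟨le_neg.2 hx.2, neg_le.2 hx.1⟩
  have reflect : oscIntegral (fun x => n * x - -g (-x) * t) (-x₀) (-a) =
      oscIntegral (-fun x => n * x - g x * t) a x₀ := by
    have comp_neg := oscIntegral_comp_neg (-fun x => n * x - g x * t) (-x₀) (-a)
    rw [neg_neg, neg_neg] at comp_neg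
    rw [← comp_neg]
    congr with x
    simp only [Pi.neg_apply]
    ring
  rw [← norm_oscIntegral_neg, ← reflect]
  refine norm_oscIntegral_phase_le_of_deriv_max_left (g := fun x => -g (-x))
    (G := fun x => G (-x)) hm hr (by linarith) ht (hg.comp continuousOn_neg maps).neg
    (fun x hx => ?_) ?_ ?_ ?_
  · have reflected := (hderiv (-x) ⟨lt_neg.1 hx.2, neg_lt.1 hx.1⟩).comp x (hasDerivAt_neg x)
    simpa [Function.comp_def, Pi.neg_def] using reflected.neg
  · exact (hG.comp_linearMap (-LinearMap.id)).subset (fun x hx => maps hx) (convex_Icc _ _)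
  · intro x hx
    simpa using hmax (maps hx)
  · have := strongConcaveOn_comp_neg hstrong
    rwa [neg_Icc, neg_sub', sub_neg_eq_add] at this

theorem norm_oscIntegral_phase_le_of_deriv_interior_max (hm : 0 < m) (hr : 0 < r)
    (ha : a ≤ x₀ - r) (hb : x₀ + r ≤ b) (ht : 1 ≤ |t|) (hg : ContinuousOn g (Icc a b))
    (hderiv : ∀ x ∈ Ioo a b, HasDerivAt g (G x) x) (hG : ConcaveOn ℝ (Icc a b) G)
    (hmax : IsMaxOn G (Icc a b) x₀) (hstrong : StrongConcaveOn (Icc (x₀ - r) (x₀ + r)) m G) :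
    ‖oscIntegral (fun x => n * x - g x * t) a b‖ ≤
      2 * (8 / √(m / 2 * r) + r) * |t| ^ (-(1 / 3) : ℝ) := by
  have ha₀ : a ≤ x₀ := by linarith
  have hb₀ : x₀ ≤ b := by linarith
  have left_sub : Icc a x₀ ⊆ Icc a b := Icc_subset_Icc_right hb₀
  have right_sub : Icc x₀ b ⊆ Icc a b := Icc_subset_Icc_left ha₀
  have left := norm_oscIntegral_phase_le_of_deriv_max_right (n := n) hm hr ha ht (hg.mono left_sub)
    (fun x hx => hderiv x ⟨hx.1, hx.2.trans_le hb₀⟩) (hG.subset left_sub (convex_Icc _ _))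
    (hmax.on_subset left_sub)
    (strongConcaveOn_subset hstrong (Icc_subset_Icc_right (by linarith)) (convex_Icc _ _))
  have right := norm_oscIntegral_phase_le_of_deriv_max_left (n := n) hm hr hb ht (hg.mono right_sub)
    (fun x hx => hderiv x ⟨ha₀.trans_lt hx.1, hx.2⟩) (hG.subset right_sub (convex_Icc _ _))
    (hmax.on_subset right_sub)
    (strongConcaveOn_subset hstrong (Icc_subset_Icc_left (by linarith)) (convex_Icc _ _))
  rw [← oscIntegral_add_adjacent ha₀ hb₀ (by fun_prop)]
  linarith [norm_add_le (oscIntegral (fun x => n * x - g x * t) a x₀)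
    (oscIntegral (fun x => n * x - g x * t) x₀ b)]

end ThirdDerivativeTest

section Mixture

theorem integrable_tsum_of_summable_integral_norm {X E ι : Type*} [MeasurableSpace X]
    {μ : Measure X} [NormedAddCommGroup E] [CompleteSpace E] [Countable ι] {F : ι → X → E}
    (hF : ∀ i, Integrable (F i) μ) (hsum : Summable fun i => ∫ u, ‖F i u‖ ∂μ) :
    Integrable (fun u => ∑' i, F i u) μ := by
  have finite : ∫⁻ u, ∑' i, ‖F i u‖ₑ ∂μ ≠ ⊤ := by
    rw [lintegral_tsum fun i => (hF i).1.enorm]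
    simp_rw [← ofReal_integral_norm_eq_lintegral_enorm (hF _)]
    exact hsum.tsum_ofReal_ne_top
  have summable : ∀ᵐ u ∂μ, Summable fun i => F i u := by
    filter_upwards [ae_lt_top' (AEMeasurable.tsum fun i => (hF i).1.enorm) finite] with u hu
    exact (tsum_enorm_ne_top_iff_summable_norm.1 hu.ne).of_norm
  refine ⟨aestronglyMeasurable_of_tendsto_ae atTop
    (fun t => Finset.aestronglyMeasurable_fun_sum t fun i _ => (hF i).1)
    (summable.mono fun u hu => hu.hasSum), ?_⟩
  exact (lintegral_mono fun u => enorm_tsum_le_tsum_enorm).trans_lt finite.lt_top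

variable {X E : Type*} [MeasurableSpace X] {μ : Measure X} [NormedAddCommGroup E]
  [InnerProductSpace ℝ E] {s : Set E} {m : X → ℝ}

theorem strongConcaveOn_integral {f : X → E → ℝ} (hs : Convex ℝ s)
    (hconc : ∀ᵐ u ∂μ, StrongConcaveOn s (m u) (f u)) (hf : ∀ x ∈ s, Integrable (f · x) μ)
    (hm : Integrable m μ) : StrongConcaveOn s (∫ u, m u ∂μ) fun x => ∫ u, f u x ∂μ := by
  simp only [strongConcaveOn_iff_convex] at hconc ⊢
  have quad : ∀ x : E, Integrable (fun u => m u / 2 * ‖x‖ ^ 2) μ := fun x =>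
    (hm.div_const 2).mul_const _
  refine (integral_concaveOn_of_integrand_ae hs hconc fun x hx => (hf x hx).add (quad x)).congr
    fun x hx => ?_
  simp only [integral_add (hf x hx) (quad x), integral_mul_const, integral_div]

theorem strongConcaveOn_tsum_mul_integral {W : ℕ → X → ℝ} {b : ℕ → E → ℝ} (hs : Convex ℝ s)
    (hW : ∀ k, Integrable (W k) μ) (hW₀ : ∀ k, 0 ≤ᵐ[μ] W k)
    (hb : ∀ x ∈ s, Summable fun k => |b k x| * ∫ u, W k u ∂μ)
    (hconc : ∀ᵐ u ∂μ, StrongConcaveOn s (m u) fun x => ∑' k, b k x * W k u)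
    (hm : Integrable m μ) :
    StrongConcaveOn s (∫ u, m u ∂μ) fun x => ∑' k, b k x * ∫ u, W k u ∂μ := by
  have term : ∀ k x, Integrable (fun u => b k x * W k u) μ := fun k x => (hW k).const_mul _
  have norms : ∀ x ∈ s, Summable fun k => ∫ u, ‖b k x * W k u‖ ∂μ := fun x hx => by
    refine (hb x hx).congr fun k => ?_
    rw [← integral_const_mul]
    refine integral_congr_ae ((hW₀ k).mono fun u hu => ?_)
    simp only [norm_mul, Real.norm_eq_abs, abs_of_nonneg hu]
  have mixed := strongConcaveOn_integral hs hconc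
    (fun x hx => integrable_tsum_of_summable_integral_norm (term · x) (norms x hx)) hm
  refine strongConcaveOn_congr mixed fun x hx => ?_
  simp only [← integral_const_mul]
  exact (integral_tsum_of_summable_integral_norm (term · x) (norms x hx)).symm

end Mixture

section Polylogarithm

/-- The polylogarithm `Li_p(z) = ∑_{k ≥ 1} z ^ k / k ^ p` of natural order `p`; the index is shifted
so that the sum runs over `ℕ`. -/
def polylog (p : ℕ) (z : ℂ) : ℂ := ∑' k : ℕ, z ^ (k + 1) / ((k : ℂ) + 1) ^ p

variable {r x : ℝ}

theorem norm_pow_div_le (p k : ℕ) (z : ℂ) : ‖z ^ (k + 1) / ((k : ℂ) + 1) ^ p‖ ≤ ‖z‖ ^ (k + 1) := by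
  have one_le : (1 : ℝ) ≤ ‖((k : ℂ) + 1) ^ p‖ := by
    rw [norm_pow, ← Nat.cast_add_one, Complex.norm_natCast]
    exact one_le_pow₀ (by simp)
  rw [norm_div, norm_pow]
  exact div_le_self (by positivity) one_le

theorem hasSum_polylog (p : ℕ) {z : ℂ} (hz : ‖z‖ < 1) :
    HasSum (fun k : ℕ => z ^ (k + 1) / ((k : ℂ) + 1) ^ p) (polylog p z) :=
  (Summable.of_norm_bounded ((summable_nat_add_iff 1).2
    (summable_geometric_of_lt_one (norm_nonneg z) hz)) fun k => norm_pow_div_le p k z).hasSum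

theorem polylog_zero {z : ℂ} (hz : ‖z‖ < 1) : polylog 0 z = z / (1 - z) := by
  simp only [polylog, pow_zero, div_one, pow_succ, tsum_mul_right, tsum_geometric_of_norm_lt_one hz]
  rw [inv_mul_eq_div]

theorem hasDerivAt_polylog_circleMap (p : ℕ) (hr₀ : 0 ≤ r) (hr : r < 1) (x : ℝ) :
    HasDerivAt (fun x => polylog (p + 1) (circleMap 0 r x))
      (polylog p (circleMap 0 r x) * Complex.I) x := by
  have norm_circle : ∀ x, ‖circleMap 0 r x‖ = r := fun x => by
    rw [norm_circleMap_zero, abs_of_nonneg hr₀]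
  simp only [polylog, ← tsum_mul_right]
  refine hasDerivAt_tsum (u := fun k : ℕ => r ^ (k + 1)) (y₀ := 0)
    (g := fun (k : ℕ) y => circleMap 0 r y ^ (k + 1) / ((k : ℂ) + 1) ^ (p + 1))
    (g' := fun (k : ℕ) y => circleMap 0 r y ^ (k + 1) / ((k : ℂ) + 1) ^ p * Complex.I)
    ((summable_nat_add_iff 1).2 (summable_geometric_of_lt_one hr₀ hr)) (fun k y => ?_)
    (fun k y => ?_) (hasSum_polylog (p + 1) (by rwa [norm_circle])).summable x
  · have succ_ne : (k : ℂ) + 1 ≠ 0 := k.cast_add_one_ne_zero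
    have term := ((hasDerivAt_circleMap 0 r y).fun_pow (k + 1)).div_const (((k : ℂ) + 1) ^ (p + 1))
    refine term.congr_deriv ?_
    rw [Nat.add_sub_cancel]
    push_cast
    field_simp
    ring
  · rw [norm_mul, Complex.norm_I, mul_one]
    simpa only [norm_circle] using norm_pow_div_le p k (circleMap 0 r y)

theorem hasDerivAt_polylog_zero_circleMap (hr₀ : 0 ≤ r) (hr : r < 1) (x : ℝ) :
    HasDerivAt (fun x => polylog 0 (circleMap 0 r x))
      (circleMap 0 r x / (1 - circleMap 0 r x) ^ 2 * Complex.I) x := by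
  have norm_lt : ∀ x, ‖circleMap 0 r x‖ < 1 := fun x => by
    rwa [norm_circleMap_zero, abs_of_nonneg hr₀]
  have one_sub_ne : 1 - circleMap 0 r x ≠ 0 := fun h => by
    simpa [← sub_eq_zero.1 h] using norm_lt x
  rw [funext fun x => polylog_zero (norm_lt x)]
  have circle := hasDerivAt_circleMap 0 r x
  refine (circle.div (circle.const_sub 1) one_sub_ne).congr_deriv ?_
  ring

theorem circleMap_pow_div_natCast (r x : ℝ) (p k : ℕ) :
    circleMap 0 r x ^ (k + 1) / ((k : ℂ) + 1) ^ p =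
      circleMap 0 (r ^ (k + 1)) (((k : ℝ) + 1) * x) / (((k : ℝ) + 1) ^ p : ℝ) := by
  rw [circleMap_zero_pow]
  push_cast
  rfl

theorem hasSum_sin_polylog_one (hr₀ : 0 ≤ r) (hr : r < 1) (x : ℝ) :
    HasSum (fun k : ℕ => Real.sin (((k : ℝ) + 1) * x) * (r ^ (k + 1) / ((k : ℝ) + 1)))
      (polylog 1 (circleMap 0 r x)).im := by
  have sum := Complex.hasSum_im (hasSum_polylog 1 (z := circleMap 0 r x)
    (by rwa [norm_circleMap_zero, abs_of_nonneg hr₀]))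
  refine sum.congr_fun fun k => ?_
  rw [circleMap_pow_div_natCast, Complex.div_ofReal_im, circleMap_zero_im, pow_one]
  ring

theorem hasSum_cos_polylog_two (hr₀ : 0 ≤ r) (hr : r < 1) (x : ℝ) :
    HasSum (fun k : ℕ => Real.cos (((k : ℝ) + 1) * x) * (r ^ (k + 1) / ((k : ℝ) + 1) ^ 2))
      (polylog 2 (circleMap 0 r x)).re := by
  have sum := Complex.hasSum_re (hasSum_polylog 2 (z := circleMap 0 r x)
    (by rwa [norm_circleMap_zero, abs_of_nonneg hr₀]))
  refine sum.congr_fun fun k => ?_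
  rw [circleMap_pow_div_natCast, Complex.div_ofReal_re, circleMap_zero_re]
  ring

end Polylogarithm

section CircleSeries

variable {r x : ℝ}

theorem hasDerivAt_re_polylog_circleMap (p : ℕ) (hr₀ : 0 ≤ r) (hr : r < 1) (x : ℝ) :
    HasDerivAt (fun x => (polylog (p + 1) (circleMap 0 r x)).re)
      (-(polylog p (circleMap 0 r x)).im) x := by
  have := Complex.reCLM.hasFDerivAt.comp_hasDerivAt x (hasDerivAt_polylog_circleMap p hr₀ hr x)
  rwa [Complex.reCLM_apply, Complex.mul_I_re] at this

theorem hasDerivAt_im_polylog_circleMap (p : ℕ) (hr₀ : 0 ≤ r) (hr : r < 1) (x : ℝ) :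
    HasDerivAt (fun x => (polylog (p + 1) (circleMap 0 r x)).im)
      (polylog p (circleMap 0 r x)).re x := by
  have := Complex.imCLM.hasFDerivAt.comp_hasDerivAt x (hasDerivAt_polylog_circleMap p hr₀ hr x)
  rwa [Complex.imCLM_apply, Complex.mul_I_im] at this

theorem hasDerivAt_re_polylog_zero_circleMap (hr₀ : 0 ≤ r) (hr : r < 1) (x : ℝ) :
    HasDerivAt (fun x => (polylog 0 (circleMap 0 r x)).re)
      (-(circleMap 0 r x / (1 - circleMap 0 r x) ^ 2).im) x := by
  have := Complex.reCLM.hasFDerivAt.comp_hasDerivAt x (hasDerivAt_polylog_zero_circleMap hr₀ hr x)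
  rwa [Complex.reCLM_apply, Complex.mul_I_re] at this

theorem normSq_one_sub_circleMap (r x : ℝ) :
    Complex.normSq (1 - circleMap 0 r x) = 1 - 2 * r * Real.cos x + r ^ 2 := by
  rw [Complex.normSq_apply, Complex.sub_re, Complex.sub_im, circleMap_zero_re, circleMap_zero_im,
    Complex.one_re, Complex.one_im]
  linear_combination r ^ 2 * Real.sin_sq_add_cos_sq x

theorem normSq_one_sub_circleMap_pos (hr₀ : 0 ≤ r) (hr : r < 1) (x : ℝ) :
    0 < Complex.normSq (1 - circleMap 0 r x) := by
  rw [normSq_one_sub_circleMap]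
  nlinarith [Real.cos_le_one x]

theorem normSq_one_sub_circleMap_le (hr₀ : 0 ≤ r) (x : ℝ) :
    Complex.normSq (1 - circleMap 0 r x) ≤ (1 + r) ^ 2 := by
  rw [normSq_one_sub_circleMap]
  nlinarith [Real.neg_one_le_cos x]

theorem re_div_one_sub_circleMap (r x : ℝ) :
    (circleMap 0 r x / (1 - circleMap 0 r x)).re =
      (r * Real.cos x - r ^ 2) / Complex.normSq (1 - circleMap 0 r x) := by
  rw [Complex.div_re, ← add_div, Complex.sub_re, Complex.sub_im, circleMap_zero_re,
    circleMap_zero_im, Complex.one_re, Complex.one_im]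
  congr 1
  linear_combination -r ^ 2 * Real.sin_sq_add_cos_sq x

theorem im_div_one_sub_circleMap_sq (r x : ℝ) :
    (circleMap 0 r x / (1 - circleMap 0 r x) ^ 2).im =
      r * (1 - r ^ 2) * Real.sin x / Complex.normSq (1 - circleMap 0 r x) ^ 2 := by
  rw [Complex.div_im, ← sub_div, map_pow, sq (1 - circleMap 0 r x), Complex.mul_re, Complex.mul_im,
    Complex.sub_re, Complex.sub_im, circleMap_zero_re, circleMap_zero_im, Complex.one_re,
    Complex.one_im]
  congr 1
  linear_combination -r ^ 3 * Real.sin x * Real.sin_sq_add_cos_sq x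

theorem strongConcaveOn_tsum_sin_mul_pow_div {s : Set ℝ} {c : ℝ} (hr₀ : 0 ≤ r) (hr : r < 1)
    (hs : Convex ℝ s) (hc : 0 ≤ c) (hsin : ∀ x ∈ s, c ≤ Real.sin x) :
    StrongConcaveOn s (c / 8 * (r * (1 - r)))
      fun x => ∑' k : ℕ, Real.sin (((k : ℝ) + 1) * x) * (r ^ (k + 1) / ((k : ℝ) + 1)) := by
  simp only [fun x => (hasSum_sin_polylog_one hr₀ hr x).tsum_eq]
  refine strongConcaveOn_of_hasDerivAt2_le hs
    (fun x _ => (hasDerivAt_im_polylog_circleMap 0 hr₀ hr x).continuousAt.continuousWithinAt)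
    (fun x _ => hasDerivAt_im_polylog_circleMap 0 hr₀ hr x)
    (fun x _ => hasDerivAt_re_polylog_zero_circleMap hr₀ hr x) fun x hx => ?_
  have pos := normSq_one_sub_circleMap_pos hr₀ hr x
  have le : Complex.normSq (1 - circleMap 0 r x) ^ 2 ≤ 8 * (1 + r) := calc
    _ ≤ ((1 + r) ^ 2) ^ 2 := by gcongr; exact normSq_one_sub_circleMap_le hr₀ x
    _ ≤ 8 * (1 + r) := by nlinarith [pow_le_pow_left₀ (by linarith) (by linarith : 1 + r ≤ 2) 3]
  have c_le := hsin x (interior_subset hx)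
  rw [im_div_one_sub_circleMap_sq, neg_le_neg_iff, le_div_iff₀ (by positivity)]
  calc c / 8 * (r * (1 - r)) * Complex.normSq (1 - circleMap 0 r x) ^ 2
    _ ≤ c / 8 * (r * (1 - r)) * (8 * (1 + r)) := by
      have := sub_pos.2 hr
      gcongr
    _ = r * (1 - r ^ 2) * c := by ring
    _ ≤ r * (1 - r ^ 2) * Real.sin x := by
      have : 0 ≤ 1 - r ^ 2 := by nlinarith
      gcongr

theorem sin_half_sq (y : ℝ) : Real.sin (y / 2) ^ 2 = (1 - Real.cos y) / 2 := by
  rw [Real.sin_sq_eq_half_sub, mul_div_cancel₀ y two_ne_zero]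
  ring

theorem hasSum_sin_sq_div_sq (hx : x ∈ Icc 0 (2 * π)) :
    HasSum (fun k : ℕ => Real.sin (((k : ℝ) + 1) * x / 2) ^ 2 / ((k : ℝ) + 1) ^ 2)
      (π / 4 * x - x ^ 2 / 8) := by
  have unit : x / (2 * π) ∈ Icc (0 : ℝ) 1 :=
    ⟨div_nonneg hx.1 (by positivity), (div_le_one (by positivity)).2 hx.2⟩
  have bernoulli : ((Polynomial.bernoulli (2 * 1)).map (algebraMap ℚ ℝ)).eval (x / (2 * π)) =
      (x / (2 * π)) ^ 2 - x / (2 * π) + 1 / 6 := by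
    simp only [Polynomial.bernoulli_def, Finset.sum_range_succ, Finset.sum_range_zero,
      Polynomial.map_add, Polynomial.map_monomial, Polynomial.map_zero, Polynomial.eval_add,
      Polynomial.eval_monomial, Polynomial.eval_zero, eq_ratCast]
    norm_num [Nat.choose]
    ring
  have sum := (hasSum_zeta_two.sub (hasSum_one_div_nat_pow_mul_cos one_ne_zero unit)).div_const 2
  rw [← hasSum_nat_add_iff' 1, bernoulli] at sum
  convert! sum using 1
  · ext k
    have angle : 2 * π * ((k : ℝ) + 1) * (x / (2 * π)) = ((k : ℝ) + 1) * x := by field_simp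
    rw [sin_half_sq, Nat.cast_add_one, angle]
    ring
  · simp only [Finset.range_one, Finset.sum_singleton, Nat.cast_zero, zero_pow two_ne_zero,
      div_zero, mul_zero, zero_mul, Real.cos_zero, sub_self, zero_div, sub_zero, Nat.factorial_two,
      mul_one, Nat.cast_ofNat]
    field_simp
    ring

theorem hasSum_sin_sq_mul_one_sub_pow_div (hr₀ : 0 ≤ r) (hr : r < 1) (hx : x ∈ Icc 0 (2 * π)) :
    HasSum (fun k : ℕ =>
        Real.sin (((k : ℝ) + 1) * x / 2) ^ 2 * ((1 - r ^ (k + 1)) / ((k : ℝ) + 1) ^ 2))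
      (π / 4 * x - x ^ 2 / 8 - (polylog 2 (circleMap 0 r 0)).re / 2
        + (polylog 2 (circleMap 0 r x)).re / 2) := by
  have at_zero := (hasSum_cos_polylog_two hr₀ hr 0).div_const 2
  have at_x := (hasSum_cos_polylog_two hr₀ hr x).div_const 2
  have sum := ((hasSum_sin_sq_div_sq hx).sub at_zero).add at_x
  simp only [mul_zero, Real.cos_zero] at sum
  refine sum.congr_fun fun k => ?_
  rw [sin_half_sq]
  ring

/- The right-hand side is the Poisson kernel of the disc. -/
theorem one_add_two_mul_re_polylog_zero_circleMap (hr₀ : 0 ≤ r) (hr : r < 1) (x : ℝ) :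
    1 + 2 * (polylog 0 (circleMap 0 r x)).re =
      (1 - r ^ 2) / Complex.normSq (1 - circleMap 0 r x) := by
  have pos := normSq_one_sub_circleMap_pos hr₀ hr x
  rw [polylog_zero (by rwa [norm_circleMap_zero, abs_of_nonneg hr₀]), re_div_one_sub_circleMap]
  field_simp
  rw [normSq_one_sub_circleMap]
  ring

theorem one_sub_div_two_le_one_add_two_mul_re_polylog_zero_circleMap (hr₀ : 0 ≤ r) (hr : r < 1)
    (x : ℝ) : (1 - r) / 2 ≤ 1 + 2 * (polylog 0 (circleMap 0 r x)).re := by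
  rw [one_add_two_mul_re_polylog_zero_circleMap hr₀ hr,
    div_le_div_iff₀ two_pos (normSq_one_sub_circleMap_pos hr₀ hr x)]
  have := sub_pos.2 hr
  calc (1 - r) * Complex.normSq (1 - circleMap 0 r x)
    _ ≤ (1 - r) * (1 + r) ^ 2 := by
      gcongr
      exact normSq_one_sub_circleMap_le hr₀ x
    _ ≤ (1 - r) * ((1 + r) * 2) := by
      gcongr
      nlinarith
    _ = (1 - r ^ 2) * 2 := by ring

theorem strongConcaveOn_tsum_sin_sq_mul_one_sub_pow_div (hr₀ : 0 ≤ r) (hr : r < 1) :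
    StrongConcaveOn (Icc 0 (2 * π)) ((1 - r) / 8) fun x => ∑' k : ℕ,
      Real.sin (((k : ℝ) + 1) * x / 2) ^ 2 * ((1 - r ^ (k + 1)) / ((k : ℝ) + 1) ^ 2) := by
  suffices key : StrongConcaveOn (Icc 0 (2 * π)) ((1 - r) / 8) fun x => π / 4 * x - x ^ 2 / 8 -
      (polylog 2 (circleMap 0 r 0)).re / 2 + (polylog 2 (circleMap 0 r x)).re / 2 from
    strongConcaveOn_congr key fun x hx => (hasSum_sin_sq_mul_one_sub_pow_div hr₀ hr hx).tsum_eq.symm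
  have deriv : ∀ x, HasDerivAt (fun x => π / 4 * x - x ^ 2 / 8 -
      (polylog 2 (circleMap 0 r 0)).re / 2 + (polylog 2 (circleMap 0 r x)).re / 2)
      (π / 4 - x / 4 - (polylog 1 (circleMap 0 r x)).im / 2) x := fun x => by
    refine ((((hasDerivAt_const_mul (π / 4)).sub ((hasDerivAt_pow 2 x).div_const 8)).sub_const
      _).add ((hasDerivAt_re_polylog_circleMap 1 hr₀ hr x).div_const 2)).congr_deriv ?_
    push_cast
    ring
  have deriv_deriv : ∀ x, HasDerivAt (fun x => π / 4 - x / 4 - (polylog 1 (circleMap 0 r x)).im / 2)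
      (-(1 / 4) - (polylog 0 (circleMap 0 r x)).re / 2) x := fun x =>
    (((hasDerivAt_id x).div_const 4).const_sub (π / 4)).sub
      ((hasDerivAt_im_polylog_circleMap 0 hr₀ hr x).div_const 2)
  refine strongConcaveOn_of_hasDerivAt2_le (convex_Icc _ _)
    (fun x _ => (deriv x).continuousAt.continuousWithinAt) (fun x _ => deriv x)
    (fun x _ => deriv_deriv x) fun x _ => ?_
  linarith [one_sub_div_two_le_one_add_two_mul_re_polylog_zero_circleMap hr₀ hr x]

end CircleSeries

section Symbol

variable {α : ℝ}

theorem summable_mul_inv_nat_add_one_rpow {p C : ℝ} {b : ℕ → ℝ} (hp : 1 < p) (hb : ∀ k, |b k| ≤ C) :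
    Summable fun k : ℕ => b k * (((k : ℝ) + 1) ^ p)⁻¹ := by
  have inv := (summable_nat_add_iff 1).2 (Real.summable_nat_rpow_inv.2 hp)
  simp only [Nat.cast_add_one] at inv
  refine Summable.of_norm_bounded (inv.mul_left C) fun k => ?_
  rw [norm_mul, Real.norm_of_nonneg (by positivity : 0 ≤ (((k : ℝ) + 1) ^ p)⁻¹)]
  exact mul_le_mul_of_nonneg_right (hb k) (by positivity)

theorem summable_sigma1 (hα : 0 < α) (x : ℝ) : Summable fun k : ℕ =>
    Real.sin (((k : ℝ) + 1) * x / 2) ^ 2 / ((k : ℝ) + 1) ^ (1 + α) :=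
  summable_mul_inv_nat_add_one_rpow (C := 1) (by linarith) fun k => by
    rw [abs_sq]
    exact Real.sin_sq_le_one _

theorem sigma1_neg (α x : ℝ) : sigma1 α (-x) = sigma1 α x := by
  simp only [sigma1, mul_neg, neg_div, Real.sin_neg, neg_sq]

theorem continuous_tsum_div_nat_add_one_rpow {p : ℝ} {b : ℕ → ℝ → ℝ} (hp : 1 < p)
    (hcont : ∀ k, Continuous (b k)) (hb : ∀ k x, |b k x| ≤ 1) :
    Continuous fun x => ∑' k : ℕ, b k x / ((k : ℝ) + 1) ^ p := by
  refine continuous_tsum (fun k => (hcont k).div_const _)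
    (summable_mul_inv_nat_add_one_rpow (b := 1) (C := 1) hp fun k => abs_one.le) fun k x => ?_
  rw [norm_div, Real.norm_of_nonneg (by positivity : 0 ≤ ((k : ℝ) + 1) ^ p), div_eq_mul_inv]
  exact mul_le_mul_of_nonneg_right (hb k x) (by positivity)

theorem continuous_sigma1 (hα : 0 < α) : Continuous (sigma1 α) :=
  continuous_tsum_div_nat_add_one_rpow (by linarith) (fun k => by fun_prop) fun k x => by
    rw [abs_sq]
    exact Real.sin_sq_le_one _

end Symbol

section BernsteinWeight

variable {α : ℝ}

/-- The integrand, at `c = 1`, of the Bernstein representation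
`M * c ^ (1 - α) = ∫ u in Ioi 0, u ^ (α - 2) * (1 - exp (-(c * u)))`, where `M` is the
integral of `bernsteinWeight α`. Through it the coefficients `k ^ (-(1 + α))` are mixtures of
`(1 - r ^ k) / k ^ 2` over `r = exp (-u)`. -/
def bernsteinWeight (α u : ℝ) : ℝ := u ^ (α - 2) * (1 - Real.exp (-u))

theorem bernsteinWeight_pos {u : ℝ} (hu : 0 < u) : 0 < bernsteinWeight α u :=
  mul_pos (by positivity) (sub_pos.2 (Real.exp_lt_one_iff.2 (neg_neg_of_pos hu)))

theorem integrableOn_bernsteinWeight (hα₀ : 0 < α) (hα₁ : α < 1) :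
    IntegrableOn (bernsteinWeight α) (Ioi 0) := by
  have meas : Measurable (bernsteinWeight α) := by unfold bernsteinWeight; fun_prop
  rw [← Ioc_union_Ioi_eq_Ioi zero_le_one]
  refine IntegrableOn.union ?_ ?_
  · refine Integrable.mono' ((intervalIntegrable_iff_integrableOn_Ioc_of_le zero_le_one).1
      (intervalIntegral.intervalIntegrable_rpow' (by linarith : -1 < α - 1)))
      meas.aestronglyMeasurable (ae_restrict_of_forall_mem measurableSet_Ioc fun u hu => ?_)
    rw [Real.norm_of_nonneg (bernsteinWeight_pos hu.1).le, bernsteinWeight,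
      show α - 1 = α - 2 + 1 by ring, Real.rpow_add_one hu.1.ne']
    have := hu.1
    gcongr
    linarith [Real.add_one_le_exp (-u)]
  · refine Integrable.mono' (integrableOn_Ioi_rpow_of_lt (by linarith : α - 2 < -1) one_pos)
      meas.aestronglyMeasurable (ae_restrict_of_forall_mem measurableSet_Ioi fun u hu => ?_)
    have u_pos : 0 < u := one_pos.trans hu
    rw [Real.norm_of_nonneg (bernsteinWeight_pos u_pos).le]
    exact mul_le_of_le_one_right (by positivity) (by linarith [Real.exp_pos (-u)])

theorem integral_bernsteinWeight_pos (hα₀ : 0 < α) (hα₁ : α < 1) :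
    0 < ∫ u in Ioi 0, bernsteinWeight α u := by
  have nonneg := ae_restrict_of_forall_mem (μ := volume) measurableSet_Ioi
    fun u (hu : u ∈ Ioi (0 : ℝ)) => (bernsteinWeight_pos (α := α) hu).le
  have support : Ioi 0 ⊆ Function.support (bernsteinWeight α) := fun u hu =>
    (bernsteinWeight_pos hu).ne'
  refine (setIntegral_pos_iff_support_of_nonneg_ae nonneg
    (integrableOn_bernsteinWeight hα₀ hα₁)).2 ?_
  rw [inter_eq_right.2 support, Real.volume_Ioi]
  exact ENNReal.zero_lt_top

theorem integral_bernsteinWeight_mul {c : ℝ} (hc : 0 < c) :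
    ∫ u in Ioi 0, (c ^ α)⁻¹ * bernsteinWeight α (c * u) =
      (∫ u in Ioi 0, bernsteinWeight α u) * (c ^ (1 + α))⁻¹ := by
  rw [integral_const_mul, integral_comp_mul_left_Ioi _ _ hc, mul_zero, smul_eq_mul,
    Real.rpow_add hc, Real.rpow_one, mul_inv]
  ring

theorem bernsteinWeight_mul {c u : ℝ} (hc : 0 < c) (hu : 0 < u) :
    (c ^ α)⁻¹ * bernsteinWeight α (c * u) = u ^ (α - 2) * ((1 - Real.exp (-(c * u))) / c ^ 2) := by
  rw [bernsteinWeight, Real.mul_rpow hc.le hu.le, Real.rpow_sub hc, Real.rpow_two]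
  field_simp

end BernsteinWeight

section SlowDecay

variable {α : ℝ}

theorem strongConcaveOn_sigma1_one : StrongConcaveOn (Icc 0 (2 * π)) (1 / 8) (sigma1 1) := by
  have := strongConcaveOn_tsum_sin_sq_mul_one_sub_pow_div le_rfl zero_lt_one
  rw [sub_zero] at this
  refine strongConcaveOn_congr this fun x _ => tsum_congr fun k => ?_
  rw [zero_pow k.succ_ne_zero, sub_zero, mul_one_div, one_add_one_eq_two, Real.rpow_two]

theorem strongConcaveOn_bernsteinWeight_series {u : ℝ} (hu : 0 < u) :
    StrongConcaveOn (Icc 0 (2 * π)) (bernsteinWeight α u / 8) fun x => ∑' k : ℕ,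
      Real.sin (((k : ℝ) + 1) * x / 2) ^ 2 *
        ((((k : ℝ) + 1) ^ α)⁻¹ * bernsteinWeight α (((k : ℝ) + 1) * u)) := by
  have base := strongConcaveOn_const_mul (strongConcaveOn_tsum_sin_sq_mul_one_sub_pow_div
    (Real.exp_pos (-u)).le (Real.exp_lt_one_iff.2 (neg_neg_of_pos hu)))
    (Real.rpow_nonneg hu.le (α - 2))
  rw [← mul_div_assoc] at base
  refine strongConcaveOn_congr base fun x _ => ?_
  simp only [← tsum_mul_left]
  refine tsum_congr fun k => ?_
  rw [bernsteinWeight_mul (by positivity) hu, ← Real.exp_nat_mul, mul_left_comm]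
  push_cast
  rw [mul_neg]

theorem strongConcaveOn_sigma1_of_lt_one (hα₀ : 0 < α) (hα₁ : α < 1) :
    StrongConcaveOn (Icc 0 (2 * π)) (1 / 8) (sigma1 α) := by
  set M := ∫ u in Ioi 0, bernsteinWeight α u with M_def
  have M_pos : 0 < M := integral_bernsteinWeight_pos hα₀ hα₁
  have mixture := strongConcaveOn_tsum_mul_integral (μ := volume.restrict (Ioi 0))
    (m := fun u => bernsteinWeight α u / 8) (s := Icc 0 (2 * π))
    (b := fun (k : ℕ) x => Real.sin (((k : ℝ) + 1) * x / 2) ^ 2)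
    (W := fun (k : ℕ) u => (((k : ℝ) + 1) ^ α)⁻¹ * bernsteinWeight α (((k : ℝ) + 1) * u))
    (convex_Icc _ _) (fun k => ?_) (fun k => ?_) (fun x _ => ?_)
    (ae_restrict_of_forall_mem measurableSet_Ioi fun u hu =>
      strongConcaveOn_bernsteinWeight_series hu)
    ((integrableOn_bernsteinWeight hα₀ hα₁).div_const 8)
  · have scaled := strongConcaveOn_const_mul mixture (inv_nonneg.2 M_pos.le)
    rw [integral_div, ← mul_div_assoc, inv_mul_cancel₀ M_pos.ne'] at scaled
    refine strongConcaveOn_congr scaled fun x _ => ?_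
    rw [← tsum_mul_left]
    refine tsum_congr fun k => ?_
    rw [integral_bernsteinWeight_mul (by positivity), ← M_def]
    field_simp
  · refine Integrable.const_mul ?_ _
    refine (integrableOn_Ioi_comp_mul_left_iff _ 0 (by positivity)).2 ?_
    rw [mul_zero]
    exact integrableOn_bernsteinWeight hα₀ hα₁
  · refine ae_restrict_of_forall_mem measurableSet_Ioi fun u (hu : 0 < u) => ?_
    exact mul_nonneg (by positivity) (bernsteinWeight_pos (by positivity)).le
  · simp only [integral_bernsteinWeight_mul (Nat.cast_add_one_pos _), ← mul_assoc]
    refine summable_mul_inv_nat_add_one_rpow (C := M) (by linarith) fun k => ?_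
    rw [abs_mul, abs_abs, abs_sq, abs_of_pos M_pos]
    exact mul_le_of_le_one_left M_pos.le (Real.sin_sq_le_one _)

theorem strongConcaveOn_sigma1 (hα₀ : 0 < α) (hα₁ : α ≤ 1) :
    StrongConcaveOn (Icc 0 (2 * π)) (1 / 8) (sigma1 α) := by
  rcases hα₁.lt_or_eq with h | rfl
  · exact strongConcaveOn_sigma1_of_lt_one hα₀ h
  · exact strongConcaveOn_sigma1_one

theorem norm_oscIntegral_sigma1_le_of_le_one (hα₀ : 0 < α) (hα₁ : α ≤ 1) {t : ℝ} (ht : t ≠ 0)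
    (n : ℝ) :
    ‖oscIntegral (fun x => n * x - sigma1 α x * t) 0 π‖ ≤ 8 / √(1 / 8) * |t| ^ (-(1 / 2) : ℝ) := by
  have bound := norm_oscIntegral_phase_le_of_strongConcaveOn (n := n) Real.pi_nonneg
    (by norm_num) ht (continuous_sigma1 hα₀).continuousOn
    (strongConcaveOn_subset (strongConcaveOn_sigma1 hα₀ hα₁)
      (Icc_subset_Icc_right (by linarith [Real.pi_pos])) (convex_Icc 0 π))
  rwa [Real.sqrt_mul (by norm_num), ← div_div, div_eq_mul_inv _ √|t|, Real.sqrt_eq_rpow |t|,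
    ← Real.rpow_neg (abs_nonneg t)] at bound

end SlowDecay

section FastDecay

variable {α c : ℝ} {s : Set ℝ}

/-- The sine series `∑_{k ≥ 1} sin (k x) / k ^ α`, which is twice the derivative of the symbol
`sigma1 α` when `1 < α`. -/
def sinSeries (α x : ℝ) : ℝ := ∑' k : ℕ, Real.sin (((k : ℝ) + 1) * x) / ((k : ℝ) + 1) ^ α

theorem continuous_sinSeries (hα : 1 < α) : Continuous (sinSeries α) :=
  continuous_tsum_div_nat_add_one_rpow hα (fun k => by fun_prop) fun _ _ => Real.abs_sin_le_one _

theorem sinSeries_zero (α : ℝ) : sinSeries α 0 = 0 := by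
  simp only [sinSeries, mul_zero, Real.sin_zero, zero_div, tsum_zero]

theorem sinSeries_pi (α : ℝ) : sinSeries α π = 0 := by
  simp only [sinSeries, ← Nat.cast_add_one, Real.sin_nat_mul_pi, zero_div, tsum_zero]

theorem hasDerivAt_sin_sq_div_rpow {y : ℝ} (hy : 0 < y) (x : ℝ) :
    HasDerivAt (fun x => Real.sin (y * x / 2) ^ 2 / y ^ (1 + α))
      (1 / 2 * Real.sin (y * x) / y ^ α) x := by
  have inner : HasDerivAt (fun x => y * x / 2) (y / 2) x := (hasDerivAt_const_mul y).div_const 2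
  refine ((inner.sin.fun_pow 2).div_const (y ^ (1 + α))).congr_deriv ?_
  rw [show y * x = 2 * (y * x / 2) by ring, Real.sin_two_mul, Real.rpow_add hy, Real.rpow_one]
  field_simp
  ring

theorem hasDerivAt_sigma1 (hα : 1 < α) (x : ℝ) :
    HasDerivAt (sigma1 α) (1 / 2 * sinSeries α x) x := by
  have series := hasDerivAt_tsum (y₀ := 0)
    (g := fun (k : ℕ) x => Real.sin (((k : ℝ) + 1) * x / 2) ^ 2 / ((k : ℝ) + 1) ^ (1 + α))
    (u := fun k : ℕ => 1 / 2 * (((k : ℝ) + 1) ^ α)⁻¹)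
    (summable_mul_inv_nat_add_one_rpow hα fun _ => le_rfl)
    (fun k y => hasDerivAt_sin_sq_div_rpow (α := α) (Nat.cast_add_one_pos k) y) (fun k y => ?_)
    (summable_sigma1 (by linarith) 0) x
  · refine series.congr_deriv ?_
    simp only [sinSeries, mul_div_assoc, tsum_mul_left]
  · rw [norm_div, Real.norm_of_nonneg (by positivity : 0 ≤ ((k : ℝ) + 1) ^ α), div_eq_mul_inv,
      norm_mul, Real.norm_of_nonneg one_half_pos.le]
    gcongr
    exact mul_le_of_le_one_right (by norm_num) (Real.abs_sin_le_one _)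

theorem integrableOn_rpow_mul_exp_neg_mul {p b : ℝ} (hp : -1 < p) (hb : 0 < b) :
    IntegrableOn (fun u => u ^ p * Real.exp (-(b * u))) (Ioi 0) := by
  simpa only [Real.rpow_one, neg_mul] using integrableOn_rpow_mul_exp_neg_mul_rpow hp one_pos hb

theorem integral_rpow_sub_two_mul_exp_neg_mul (hα : 1 < α) {b : ℝ} (hb : 0 < b) :
    ∫ u in Ioi 0, u ^ (α - 2) * Real.exp (-(b * u)) = Real.Gamma (α - 1) * (b * (b ^ α)⁻¹) := by
  have gamma := Real.integral_rpow_mul_exp_neg_mul_Ioi (sub_pos.2 hα) hb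
  rw [sub_sub, one_add_one_eq_two] at gamma
  rw [gamma, one_div, Real.inv_rpow hb.le, Real.rpow_sub_one hb.ne']
  field_simp

theorem strongConcaveOn_tsum_sin_mul_exp_div {u : ℝ} (hu : 0 < u) (hs : Convex ℝ s) (hc : 0 ≤ c)
    (hsin : ∀ x ∈ s, c ≤ Real.sin x) :
    StrongConcaveOn s
      (c / 8 * (u ^ (α - 2) * Real.exp (-(1 * u)) - u ^ (α - 2) * Real.exp (-(2 * u))))
      fun x => ∑' k : ℕ, Real.sin (((k : ℝ) + 1) * x) *
        (u ^ (α - 2) * Real.exp (-(((k : ℝ) + 1) * u)) / ((k : ℝ) + 1)) := by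
  have base := strongConcaveOn_const_mul (strongConcaveOn_tsum_sin_mul_pow_div
    (Real.exp_pos (-u)).le (Real.exp_lt_one_iff.2 (neg_neg_of_pos hu)) hs hc hsin)
    (Real.rpow_nonneg hu.le (α - 2))
  have modulus : u ^ (α - 2) * (c / 8 * (Real.exp (-u) * (1 - Real.exp (-u)))) =
      c / 8 * (u ^ (α - 2) * Real.exp (-(1 * u)) - u ^ (α - 2) * Real.exp (-(2 * u))) := by
    rw [one_mul, two_mul, neg_add, Real.exp_add]
    ring
  rw [modulus] at base
  refine strongConcaveOn_congr base fun x _ => ?_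
  simp only [← tsum_mul_left]
  refine tsum_congr fun k => ?_
  rw [← Real.exp_nat_mul, Nat.cast_add_one, mul_neg]
  ring

theorem strongConcaveOn_sinSeries (hα : 1 < α) (hs : Convex ℝ s) (hc : 0 ≤ c)
    (hsin : ∀ x ∈ s, c ≤ Real.sin x) :
    StrongConcaveOn s (c / 8 * (1 - 2 * (2 ^ α)⁻¹)) (sinSeries α) := by
  have Γ_pos : 0 < Real.Gamma (α - 1) := Real.Gamma_pos_of_pos (sub_pos.2 hα)
  have exp_integrable : ∀ {b : ℝ}, 0 < b →
      IntegrableOn (fun u => u ^ (α - 2) * Real.exp (-(b * u))) (Ioi 0) := fun hb =>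
    integrableOn_rpow_mul_exp_neg_mul (by linarith) hb
  have coeff : ∀ k : ℕ,
      ∫ u in Ioi 0, u ^ (α - 2) * Real.exp (-(((k : ℝ) + 1) * u)) / ((k : ℝ) + 1) =
        Real.Gamma (α - 1) * (((k : ℝ) + 1) ^ α)⁻¹ := fun k => by
    rw [integral_div, integral_rpow_sub_two_mul_exp_neg_mul hα (Nat.cast_add_one_pos k)]
    field_simp
  have mixture := strongConcaveOn_tsum_mul_integral (μ := volume.restrict (Ioi 0)) (s := s)
    (m := fun u => c / 8 * (u ^ (α - 2) * Real.exp (-(1 * u)) - u ^ (α - 2) * Real.exp (-(2 * u))))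
    (b := fun (k : ℕ) x => Real.sin (((k : ℝ) + 1) * x))
    (W := fun (k : ℕ) u => u ^ (α - 2) * Real.exp (-(((k : ℝ) + 1) * u)) / ((k : ℝ) + 1))
    hs (fun k => (exp_integrable (Nat.cast_add_one_pos k)).div_const _) (fun k => ?_)
    (fun x _ => ?_) (ae_restrict_of_forall_mem measurableSet_Ioi fun u hu =>
      strongConcaveOn_tsum_sin_mul_exp_div hu hs hc hsin)
    (((exp_integrable one_pos).sub (exp_integrable two_pos)).const_mul _)
  · simp only [coeff] at mixture
    rw [integral_const_mul, integral_sub (exp_integrable one_pos) (exp_integrable two_pos),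
      integral_rpow_sub_two_mul_exp_neg_mul hα one_pos,
      integral_rpow_sub_two_mul_exp_neg_mul hα two_pos, Real.one_rpow] at mixture
    have scaled := strongConcaveOn_const_mul mixture (inv_nonneg.2 Γ_pos.le)
    have modulus : (Real.Gamma (α - 1))⁻¹ * (c / 8 * (Real.Gamma (α - 1) * (1 * 1⁻¹) -
        Real.Gamma (α - 1) * (2 * (2 ^ α)⁻¹))) = c / 8 * (1 - 2 * (2 ^ α)⁻¹) := by field_simp
    rw [modulus] at scaled
    refine strongConcaveOn_congr scaled fun x _ => ?_
    rw [← tsum_mul_left]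
    refine tsum_congr fun k => ?_
    field_simp
  · exact ae_restrict_of_forall_mem measurableSet_Ioi fun u (hu : 0 < u) => by positivity
  · simp only [coeff, ← mul_assoc]
    refine summable_mul_inv_nat_add_one_rpow (C := Real.Gamma (α - 1)) hα fun k => ?_
    rw [abs_mul, abs_abs, abs_of_pos Γ_pos]
    exact mul_le_of_le_one_left Γ_pos.le (Real.abs_sin_le_one _)

theorem one_sub_two_mul_inv_two_rpow_pos (hα : 1 < α) : 0 < 1 - 2 * ((2 : ℝ) ^ α)⁻¹ := by
  have : (2 : ℝ) < 2 ^ α := Real.self_lt_rpow_of_one_lt one_lt_two hα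
  rw [sub_pos, ← div_eq_mul_inv, div_lt_one (by positivity)]
  exact this

theorem concaveOn_sinSeries (hα : 1 < α) : ConcaveOn ℝ (Icc 0 π) (sinSeries α) := by
  have := strongConcaveOn_sinSeries hα (convex_Icc 0 π) le_rfl fun x hx =>
    Real.sin_nonneg_of_mem_Icc hx
  rwa [zero_div, zero_mul, strongConcaveOn_zero] at this

theorem exists_pos_strongConcaveOn_sinSeries (hα : 1 < α) {a b : ℝ} (ha : 0 < a) (hab : a ≤ b)
    (hb : b < π) : ∃ m > 0, StrongConcaveOn (Icc a b) m (sinSeries α) := by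
  have min_pos : 0 < min (Real.sin a) (Real.sin b) :=
    lt_min (Real.sin_pos_of_pos_of_lt_pi ha (hab.trans_lt hb))
      (Real.sin_pos_of_pos_of_lt_pi (ha.trans_le hab) hb)
  exact ⟨_, mul_pos (div_pos min_pos (by norm_num)) (one_sub_two_mul_inv_two_rpow_pos hα),
    strongConcaveOn_sinSeries hα (convex_Icc a b) min_pos.le fun x hx =>
      strictConcaveOn_sin_Icc.concaveOn.min_le_of_mem_Icc ⟨ha.le, (hab.trans_lt hb).le⟩
        ⟨(ha.trans_le hab).le, hb.le⟩ hx⟩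

theorem sinSeries_pi_div_two_pos (hα : 1 < α) : 0 < sinSeries α (π / 2) := by
  have π_pos := Real.pi_pos
  have nonneg : ∀ x ∈ Icc 0 π, 0 ≤ sinSeries α x := fun x hx => by
    simpa only [sinSeries_zero, sinSeries_pi, min_self] using
      (concaveOn_sinSeries hα).min_le_of_mem_Icc (left_mem_Icc.2 π_pos.le)
        (right_mem_Icc.2 π_pos.le) hx
  obtain ⟨m, m_pos, hconc⟩ := exists_pos_strongConcaveOn_sinSeries hα (a := π / 4)
    (b := 3 * π / 4) (by positivity) (by linarith) (by linarith)
  have strict := (hconc.strictConcaveOn m_pos).2 (left_mem_Icc.2 (by linarith))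
    (right_mem_Icc.2 (by linarith)) (by linarith) one_half_pos one_half_pos (add_halves 1)
  simp only [smul_eq_mul] at strict
  rw [show 1 / 2 * (π / 4) + 1 / 2 * (3 * π / 4) = π / 2 by ring] at strict
  linarith [nonneg (π / 4) ⟨by positivity, by linarith⟩,
    nonneg (3 * π / 4) ⟨by positivity, by linarith⟩]

theorem exists_isMaxOn_sinSeries (hα : 1 < α) :
    ∃ x ∈ Ioo 0 π, IsMaxOn (sinSeries α) (Icc 0 π) x := by
  obtain ⟨x, hx, hmax⟩ := isCompact_Icc.exists_isMaxOn (nonempty_Icc.2 Real.pi_nonneg)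
    (continuous_sinSeries hα).continuousOn
  have pos : 0 < sinSeries α x := (sinSeries_pi_div_two_pos hα).trans_le
    (hmax ⟨by positivity, half_le_self Real.pi_nonneg⟩)
  refine ⟨x, ⟨hx.1.lt_of_ne ?_, hx.2.lt_of_ne ?_⟩, hmax⟩
  · rintro rfl
    exact pos.ne' (sinSeries_zero α)
  · rintro rfl
    exact pos.ne' (sinSeries_pi α)

theorem exists_norm_oscIntegral_sigma1_le_of_one_lt (hα : 1 < α) :
    ∃ M, ∀ t : ℝ, 1 ≤ |t| → ∀ n : ℝ,
      ‖oscIntegral (fun x => n * x - sigma1 α x * t) 0 π‖ ≤ M * |t| ^ (-(1 / 3) : ℝ) := by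
  obtain ⟨x₀, hx₀, hmax⟩ := exists_isMaxOn_sinSeries hα
  obtain ⟨r, r_pos, hr⟩ := exists_between (lt_min hx₀.1 (sub_pos.2 hx₀.2))
  obtain ⟨left, right⟩ := lt_min_iff.1 hr
  obtain ⟨m, m_pos, hconc⟩ := exists_pos_strongConcaveOn_sinSeries hα (a := x₀ - r) (b := x₀ + r)
    (by linarith) (by linarith) (by linarith)
  have half_max : IsMaxOn (fun x => 1 / 2 * sinSeries α x) (Icc 0 π) x₀ := isMaxOn_iff.2 fun x hx =>
    mul_le_mul_of_nonneg_left (isMaxOn_iff.1 hmax x hx) one_half_pos.le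
  exact ⟨_, fun t ht n => norm_oscIntegral_phase_le_of_deriv_interior_max
    (mul_pos one_half_pos m_pos) r_pos (by linarith) (by linarith) ht
    (continuous_sigma1 (by linarith)).continuousOn (fun x _ => hasDerivAt_sigma1 hα x)
    ((concaveOn_sinSeries hα).smul one_half_pos.le) half_max
    (strongConcaveOn_const_mul hconc one_half_pos.le)⟩

end FastDecay

section Propagator

variable {α t B : ℝ}

theorem Kker_eq_oscIntegral (hα : 0 < α) (t : ℝ) (n : ℤ) :
    Kker α t n = (2 * π)⁻¹ • (oscIntegral (fun x => -n * x - sigma1 α x * t) 0 π +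
      oscIntegral (fun x => n * x - sigma1 α x * t) 0 π) := by
  have phase_cont : Continuous fun x => n * x - sigma1 α x * t := by
    have := continuous_sigma1 hα
    fun_prop
  have reflect := oscIntegral_comp_neg (fun x => n * x - sigma1 α x * t) 0 π
  simp only [sigma1_neg, mul_neg, ← neg_mul, neg_zero] at reflect
  rw [reflect, oscIntegral_add_adjacent (neg_nonpos.2 Real.pi_nonneg) Real.pi_nonneg
    phase_cont.continuousOn]
  rfl

theorem norm_Kker_le (hα : 0 < α)
    (hB : ∀ n : ℝ, ‖oscIntegral (fun x => n * x - sigma1 α x * t) 0 π‖ ≤ B) (n : ℤ) :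
    ‖Kker α t n‖ ≤ B := by
  have B_nonneg : 0 ≤ B := (norm_nonneg _).trans (hB 0)
  rw [Kker_eq_oscIntegral hα, norm_smul, Real.norm_of_nonneg (by positivity),
    inv_mul_le_iff₀ (by positivity)]
  have := norm_add_le_of_le (hB (-n)) (hB n)
  nlinarith [Real.pi_gt_three]

theorem norm_Uprop_le {φ : ℤ → ℂ} (hφ : Summable fun m => ‖φ m‖) (hB : ∀ n, ‖Kker α t n‖ ≤ B)
    (n : ℤ) : ‖Uprop α t φ n‖ ≤ B * ∑' m, ‖φ m‖ := by
  refine tsum_of_norm_bounded (hφ.hasSum.mul_left B) fun m => ?_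
  rw [norm_mul]
  exact mul_le_mul_of_nonneg_right (hB (n - m)) (norm_nonneg _)

theorem le_mul_one_add_abs_rpow_neg {A M ρ v : ℝ} (hρ : 0 ≤ ρ) (hA : v ≤ A) (hA₀ : 0 ≤ A)
    (hM₀ : 0 ≤ M) (hM : 1 ≤ |t| → v ≤ M * |t| ^ (-ρ)) :
    v ≤ 2 ^ ρ * (A + M) * (1 + |t|) ^ (-ρ) := by
  have key : ∀ {s : ℝ}, 0 < s → 1 + |t| ≤ 2 * s → s ^ (-ρ) ≤ 2 ^ ρ * (1 + |t|) ^ (-ρ) := by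
    intro s hs hle
    have anti := Real.rpow_le_rpow_of_nonpos (by positivity) hle (neg_nonpos.2 hρ)
    rw [Real.mul_rpow two_pos.le hs.le, Real.rpow_neg two_pos.le] at anti
    rwa [← inv_mul_le_iff₀ (by positivity)]
  rw [mul_right_comm]
  rcases le_total 1 |t| with ht | ht
  · calc v ≤ M * |t| ^ (-ρ) := hM ht
      _ ≤ M * (2 ^ ρ * (1 + |t|) ^ (-ρ)) := by gcongr; exact key (by linarith) (by linarith)
      _ ≤ _ := by rw [mul_comm]; gcongr; linarith
  · calc v ≤ A * 1 ^ (-ρ) := by rwa [Real.one_rpow, mul_one]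
      _ ≤ A * (2 ^ ρ * (1 + |t|) ^ (-ρ)) := by gcongr; exact key one_pos (by linarith)
      _ ≤ _ := by rw [mul_comm]; gcongr; linarith

end Propagator

theorem stmt16 (α : ℝ) (hα : 0 < α) :
    ∃ C : ℝ, 0 < C ∧
      ∀ (t : ℝ) (φ : ℤ → ℂ), Summable (fun n : ℤ => ‖φ n‖) →
        ∀ n : ℤ,
          ‖Uprop α t φ n‖ ≤
            C * (1 + |t|) ^ (-(if α ≤ 1 then (1 : ℝ) / 2 else 1 / 3)) *
              ∑' m : ℤ, ‖φ m‖ := by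
  set ρ : ℝ := if α ≤ 1 then (1 : ℝ) / 2 else 1 / 3 with ρ_def
  have ρ_nonneg : 0 ≤ ρ := by positivity
  obtain ⟨M, hM⟩ : ∃ M, ∀ t : ℝ, 1 ≤ |t| → ∀ n : ℝ,
      ‖oscIntegral (fun x => n * x - sigma1 α x * t) 0 π‖ ≤ M * |t| ^ (-ρ) := by
    split_ifs at ρ_def with h
    · exact ⟨_, fun t ht => ρ_def ▸ norm_oscIntegral_sigma1_le_of_le_one hα h
        (abs_pos.1 (one_pos.trans_le ht))⟩
    · exact ρ_def ▸ exists_norm_oscIntegral_sigma1_le_of_one_lt (not_le.1 h)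
  have M_nonneg : 0 ≤ M := by simpa using (norm_nonneg _).trans (hM 1 (by simp) 0)
  refine ⟨2 ^ ρ * (π + M), by positivity, fun t φ hφ => ?_⟩
  exact norm_Uprop_le hφ (norm_Kker_le hα fun n => le_mul_one_add_abs_rpow_neg ρ_nonneg
    (by simpa using norm_oscIntegral_le_sub _ Real.pi_nonneg) Real.pi_nonneg M_nonneg (hM t · n))
end
end
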